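/- Let V be a normal algebra of differential functions in ℓ < ∞ differential variables over a field of characteristic zero, and assume that the algebra of quasiconstants F ⊆ V is a linearly closed differential field with respect to the restriction of ∂, with subfield of constants C = {c ∈ F : ∂c = 0}. Let K(∂) = (K_{ij}(∂)) be an ℓ×ℓ matrix differential operator of order N with quasiconstant coefficients whose leading coefficient K_N = (K_{ij,N})_{i,j} ∈ Mat_{ℓ×ℓ}(F) is invertible. Then for every k ≥ 0 the cohomology of the generalized variational complex (Ω•(V), δ_K) satisfies dim_C H^k(Ω•(V), δ_K) = binom(Nℓ, k+1). -/

import Mathlib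

/-- The structure of an algebra of differential functions in `ℓ` differential variables
on a commutative ring `V`: a derivation `∂ = pd` and pairwise commuting derivations
`∂/∂u_i^{(n)} = D i n` such that each `f ∈ V` is annihilated by all but finitely many of
the `D i n`, and `[D i n, ∂] = D i (n−1)` (zero for `n = 0`). -/
structure IsAlgDiffFun {V : Type*} [CommRing V] {l : ℕ}
    (pd : V → V) (D : Fin l → ℕ → V → V) : Prop where
  pd_add : ∀ a b : V, pd (a + b) = pd a + pd b
  pd_leibniz : ∀ a b : V, pd (a * b) = pd a * b + a * pd b
  d_add : ∀ (i : Fin l) (n : ℕ) (a b : V), D i n (a + b) = D i n a + D i n b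
  d_leibniz : ∀ (i : Fin l) (n : ℕ) (a b : V), D i n (a * b) = D i n a * b + a * D i n b
  d_comm : ∀ (i : Fin l) (n : ℕ) (j : Fin l) (m : ℕ) (f : V),
    D i n (D j m f) = D j m (D i n f)
  d_fin : ∀ f : V, {p : Fin l × ℕ | D p.1 p.2 f ≠ 0}.Finite
  comm_zero : ∀ (i : Fin l) (f : V), D i 0 (pd f) = pd (D i 0 f)
  comm_succ : ∀ (i : Fin l) (n : ℕ) (f : V),
    D i (n + 1) (pd f) = pd (D i (n + 1) f) + D i n f

/-- Apply a map `f` to all the coefficients of a polynomial. -/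
noncomputable def coeffMap {V : Type*} [CommRing V] {k : ℕ} (f : V → V)
    (Q : MvPolynomial (Fin k) V) : MvPolynomial (Fin k) V :=
  ∑ m ∈ Q.support, (MvPolynomial.monomial m) (f (MvPolynomial.coeff m Q))

/-- The polynomial `(λ_α + ∂)^n K_{j,i'}(λ_α) = Σ_m Σ_{p=0}^n binom(n,p) (∂^p K_{j,i',m})
λ_α^{n−p+m}`, where `K_{j,i'}(∂) = Σ_{m=0}^N K_{j,i',m} ∂^m`. -/
noncomputable def kFactor {V : Type*} [CommRing V] {l : ℕ} (pd : V → V)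
    (N : ℕ) (Kc : Fin l → Fin l → ℕ → V) (n : ℕ) (j i' : Fin l) {k : ℕ} (α : Fin k) :
    MvPolynomial (Fin k) V :=
  ∑ m ∈ Finset.range (N + 1), ∑ p ∈ Finset.range (n + 1),
    (MvPolynomial.monomial (Finsupp.single α (n - p + m)))
      ((n.choose p : V) * pd^[p] (Kc j i' m))

/-- The map `δ_K : Ω̃^k(V) → Ω̃^{k+1}(V)`:
`(δ_K P)_{i_0,…,i_k}(λ_0,…,λ_k) = Σ_α (−1)^α Σ_j Σ_n
(∂ P_{i_0,…,î_α,…,i_k}(λ_0,…,λ̂_α,…,λ_k)/∂u_j^{(n)}) ((λ_α+∂)^n K_{j,i_α}(λ_α))`. -/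
noncomputable def deltaK {V : Type*} [CommRing V] {l : ℕ} (pd : V → V)
    (D : Fin l → ℕ → V → V) (N : ℕ) (Kc : Fin l → Fin l → ℕ → V) {k : ℕ}
    (P : (Fin k → Fin l) → MvPolynomial (Fin k) V) :
    (Fin (k + 1) → Fin l) → MvPolynomial (Fin (k + 1)) V :=
  fun i => ∑ α : Fin (k + 1), (-1 : ℤ) ^ (α : ℕ) •
    ∑ j : Fin l, ∑ᶠ n : ℕ,
      coeffMap (D j n) (MvPolynomial.rename α.succAbove (P (fun b => i (α.succAbove b))))
        * kFactor pd N Kc n j (i α) α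

/-- An array `P ∈ Ω̃^k(V)` is skewsymmetric if it is skewsymmetric with respect to
simultaneous permutations of the variables `λ_1,…,λ_k` and the indices `i_1,…,i_k`. -/
def OmegaSkew {V : Type*} [CommRing V] {l k : ℕ}
    (P : (Fin k → Fin l) → MvPolynomial (Fin k) V) : Prop :=
  ∀ (σ : Equiv.Perm (Fin k)) (i : Fin k → Fin l),
    MvPolynomial.rename σ (P (fun a => i (σ a))) = (Equiv.Perm.sign σ : ℤ) • P i

/-- The action of `∂` on `Ω̃^k(V)`:
`(∂P)_{i_1,…,i_k}(λ_1,…,λ_k) = (∂ + λ_1 + ⋯ + λ_k) P_{i_1,…,i_k}(λ_1,…,λ_k)` with `∂`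
applied to the coefficients. -/
noncomputable def bigD {V : Type*} [CommRing V] {l k : ℕ} (pd : V → V)
    (P : (Fin k → Fin l) → MvPolynomial (Fin k) V) :
    (Fin k → Fin l) → MvPolynomial (Fin k) V :=
  fun i => (∑ a : Fin k, MvPolynomial.X a) * P i + coeffMap pd (P i)

/-- Membership in the subspace `V_{m,i} = {f : ∂f/∂u_j^{(n)} = 0 whenever (n,j) > (m,i)
in the lexicographic order}`. -/
def memVmi {V : Type*} [CommRing V] {l : ℕ} (D : Fin l → ℕ → V → V) (m : ℕ) (i : Fin l) (f : V) : Prop :=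
  ∀ (n : ℕ) (j : Fin l), (m < n ∨ (m = n ∧ i < j)) → D j n f = 0

/-- An algebra of differential functions is normal if `∂/∂u_i^{(m)} (V_{m,i}) = V_{m,i}`
for all `m, i`. -/
def IsNormalADF {V : Type*} [CommRing V] {l : ℕ} (D : Fin l → ℕ → V → V) : Prop :=
  ∀ (m : ℕ) (i : Fin l) (f : V), memVmi D m i f → ∃ g, memVmi D m i g ∧ D i m g = f

/-!
Expand `P ∈ Ω̃^k` in the monomials `λ^n` with indices: it becomes a skew array on `X = ℕ × Fin l`
with entries in `V`. Then `∂` becomes the total derivative of arrays and `δ_K` the exterior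
derivative which inserts `∂P/∂u_j^{(n)}` in the direction `(λ + ∂)^n K_j(λ) ∈ F[X]`. As the leading
coefficient of `K` is invertible, these directions are linearly independent, and a complement is the
`Nl`-dimensional quotient of `F[X]` by their span. It carries a connection, induced by `λ + ∂`, and
linear closedness makes it trivial: it has coordinates commuting with the derivations. In a basis
of `F[X]` adapted to all this, normality of `V` gives a Poincaré lemma: in positive degree a closed
skew array is exact as soon as its coordinates in the `Nl` remaining directions vanish, in degree
zero a closed element with vanishing coordinates is zero.

If `δ_K P = ∂ Q` then `Q` is closed, and it is unique because `∂` is injective in positive degree.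
The coordinates of `Q` in the remaining directions are killed by `∂`, so they form a skew
`(k + 1)`-array on `Nl` letters with entries in `C`. Every such array occurs, since it lifts to a
closed `Q` and `∂ Q` is exact by the Poincaré lemma; and it is zero exactly when
`P ∈ im δ_K + im ∂`. Hence `H^k` is the space of these arrays.
-/

namespace VariationalComplex

open Equiv
open Finsupp hiding add_apply smul_apply

/-- Finitely supported arrays `(c_{x_1,…,x_k})` with `k` indices in `X` and entries in `V`. With
`X = ℕ × Fin ℓ`, the entry at `((n_1, i_1), …, (n_k, i_k))` stands for the coefficient of
`λ_1 ^ n_1 ⋯ λ_k ^ n_k` in the `(i_1, …, i_k)` component of an element of `Ω̃^k(V)`. -/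
abbrev Cochain (X V : Type*) [Zero V] (k : ℕ) := (Fin k → X) →₀ V

section Skew

variable {X Y V W : Type*} [AddCommGroup V] [AddCommGroup W] {k : ℕ}

/-- The action of a permutation of the indices on arrays. -/
noncomputable def permute (σ : Perm (Fin k)) : Cochain X V k →+ Cochain X V k :=
  mapDomain.addMonoidHom (· ∘ ⇑σ⁻¹)

theorem permute_single (σ : Perm (Fin k)) (x : Fin k → X) (v : V) :
    permute σ (single x v) = single (x ∘ ⇑σ⁻¹) v :=
  mapDomain_single

theorem permute_apply (σ : Perm (Fin k)) (c : Cochain X V k) (x : Fin k → X) :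
    permute σ c x = c (x ∘ σ) := by
  conv_lhs => rw [show x = (x ∘ σ) ∘ ⇑σ⁻¹ by ext a; simp]
  exact mapDomain_apply (σ⁻¹).surjective.injective_comp_right _ _

/-- An array is skewsymmetric if every permutation of its indices multiplies it by the sign. -/
def IsSkew (c : Cochain X V k) : Prop :=
  ∀ σ : Perm (Fin k), permute σ c = (Perm.sign σ : ℤ) • c

theorem IsSkew.apply_comp {c : Cochain X V k} (hc : IsSkew c) (σ : Perm (Fin k)) (x : Fin k → X) :
    c (x ∘ σ) = (Perm.sign σ : ℤ) • c x := by
  rw [← permute_apply, hc σ, coe_smul, Pi.smul_apply]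

theorem isSkew_iff_apply_comp {c : Cochain X V k} :
    IsSkew c ↔ ∀ (σ : Perm (Fin k)) (x : Fin k → X), c (x ∘ σ) = (Perm.sign σ : ℤ) • c x :=
  ⟨IsSkew.apply_comp, fun h σ => by ext x; rw [permute_apply, h, coe_smul, Pi.smul_apply]⟩

theorem IsSkew.map {c : Cochain X V k} (hc : IsSkew c) (T : Cochain X V k →+ Cochain Y W k)
    (hT : ∀ (σ : Perm (Fin k)) x v, T (permute σ (single x v)) = permute σ (T (single x v))) :
    IsSkew (T c) := by
  intro σ
  have hcomm : T.comp (permute σ) = (permute σ).comp T := addHom_ext (hT σ)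
  rw [← AddMonoidHom.comp_apply, ← hcomm, AddMonoidHom.comp_apply, hc σ, map_zsmul]

/-- The submodule of skewsymmetric arrays. -/
noncomputable def skewCochains (R X V : Type*) [AddCommGroup V] [Semiring R] [Module R V] (k : ℕ) :
    Submodule R (Cochain X V k) where
  carrier := {c | IsSkew c}
  zero_mem' σ := by rw [map_zero, smul_zero]
  add_mem' hb hc σ := by rw [map_add, hb σ, hc σ, smul_add]
  smul_mem' r c hc := isSkew_iff_apply_comp.2 fun σ x => by
    rw [coe_smul, Pi.smul_apply, hc.apply_comp, Pi.smul_apply, smul_comm]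

@[simp]
theorem mem_skewCochains {R : Type*} [Semiring R] [Module R V] {c : Cochain X V k} :
    c ∈ skewCochains R X V k ↔ IsSkew c :=
  Iff.rfl

theorem IsSkew.eq_zero_of_eq [IsAddTorsionFree V] {c : Cochain X V k} (hc : IsSkew c)
    {x : Fin k → X} {a b : Fin k} (hab : a ≠ b) (hx : x a = x b) : c x = 0 := by
  have hswap : x ∘ swap a b = x := by
    rw [comp_swap_eq_update, hx, Function.update_eq_self, ← hx, Function.update_eq_self]
  have hneg : c x = -c x := by
    simpa [hswap, Perm.sign_swap hab] using hc.apply_comp (swap a b) x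
  exact self_eq_neg.1 hneg

theorem IsSkew.apply_eq_smul_cons {c : Cochain X V (k + 1)} (hc : IsSkew c) (x : Fin (k + 1) → X)
    (α : Fin (k + 1)) : c x = (-1 : ℤ) ^ (α : ℕ) • c (Fin.cons (x α) (α.removeNth x)) := by
  rw [Fin.cons_removeNth_eq_comp_cycleRange_symm, hc.apply_comp, Perm.sign_symm,
    Fin.sign_cycleRange, smul_smul]
  simp [← mul_pow]

/-- The array of the entries of `c` with first index `t`. -/
noncomputable def contract (t : X) (c : Cochain X V (k + 1)) : Cochain X V k :=
  comapDomain (fun x => (Fin.cons t x : Fin (k + 1) → X)) c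
    (Fin.cons_right_injective (α := fun _ => X) t).injOn

@[simp]
theorem contract_apply (t : X) (c : Cochain X V (k + 1)) (x : Fin k → X) :
    contract t c x = c (Fin.cons t x) :=
  rfl

protected theorem IsSkew.contract {c : Cochain X V (k + 1)} (hc : IsSkew c) (t : X) :
    IsSkew (contract t c) := by
  refine isSkew_iff_apply_comp.2 fun σ x => ?_
  have hcons : (Fin.cons t (x ∘ σ) : Fin (k + 1) → X) =
      (Fin.cons t x : Fin (k + 1) → X) ∘ Perm.decomposeFin.symm (0, σ) := by
    ext a
    cases a using Fin.cases <;> simp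
  rw [contract_apply, contract_apply, hcons, hc.apply_comp]
  simp

end Skew

section ExtDiff

variable {R X V : Type*} [Semiring R] [AddCommGroup V] [Module R V] {k : ℕ}

/-- Differentiation of the entries of an array, the new index being inserted in position `α`. -/
noncomputable def insertDiff (grad : V →ₗ[R] (X →₀ V)) (α : Fin (k + 1)) :
    Cochain X V k →ₗ[R] Cochain X V (k + 1) :=
  lsum ℕ fun x => lmapDomain V R (fun y => α.insertNth y x) ∘ₗ grad

theorem insertDiff_single (grad : V →ₗ[R] (X →₀ V)) (α : Fin (k + 1)) (x : Fin k → X) (v : V) :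
    insertDiff grad α (single x v) = mapDomain (fun y => α.insertNth y x) (grad v) := by
  simp [insertDiff]

theorem insertDiff_apply (grad : V →ₗ[R] (X →₀ V)) (α : Fin (k + 1)) (c : Cochain X V k)
    (z : Fin (k + 1) → X) : insertDiff grad α c z = grad (c (α.removeNth z)) (z α) := by
  induction c using Finsupp.induction_linear with
  | zero => simp
  | add b c hb hc => simp only [map_add, Finsupp.add_apply, hb, hc]
  | single x v =>
    rw [insertDiff_single]
    by_cases hx : α.removeNth z = x
    · subst hx
      conv_lhs => rw [← Fin.insertNth_self_removeNth α z]
      rw [Fin.removeNth_insertNth, single_eq_same]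
      exact mapDomain_apply (f := fun y => α.insertNth y (α.removeNth z))
        (Fin.insertNth_left_injective (α := fun _ => X) _) _ _
    · rw [single_eq_of_ne hx, map_zero, mapDomain_of_notMem_range]
      · rfl
      · rintro ⟨y, rfl⟩
        exact hx (Fin.removeNth_insertNth ..)

/-- The exterior differential of arrays attached to a linear map `grad`, the variational
differential `δ_K` being an instance. -/
noncomputable def extDiff (grad : V →ₗ[R] (X →₀ V)) : Cochain X V k →ₗ[R] Cochain X V (k + 1) :=
  ∑ α : Fin (k + 1), (-1 : ℤ) ^ (α : ℕ) • insertDiff grad α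

theorem extDiff_apply (grad : V →ₗ[R] (X →₀ V)) (c : Cochain X V k) (z : Fin (k + 1) → X) :
    extDiff grad c z =
      ∑ α : Fin (k + 1), (-1 : ℤ) ^ (α : ℕ) • grad (c (α.removeNth z)) (z α) := by
  simp only [extDiff, LinearMap.sum_apply, LinearMap.smul_apply, finsetSum_apply,
    Finsupp.smul_apply, insertDiff_apply]

theorem extDiff_apply_cons (grad : V →ₗ[R] (X →₀ V)) (c : Cochain X V k) (t : X) (x : Fin k → X)
    (h : ∀ α : Fin k, grad (c (α.succ.removeNth (Fin.cons t x : Fin (k + 1) → X))) (x α) = 0) :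
    extDiff grad c (Fin.cons t x) = grad (c x) t := by
  rw [extDiff_apply, Fin.sum_univ_succ]
  simp [h, Fin.removeNth_zero]

theorem extDiff_apply_cons_of_eq_zero (grad : V →ₗ[R] (X →₀ V)) (c : Cochain X V k) (t : X)
    (hc : ∀ (y : Fin k → X) (a : Fin k), y a = t → c y = 0) (x : Fin k → X) :
    extDiff grad c (Fin.cons t x) = grad (c x) t := by
  refine extDiff_apply_cons grad c t x fun α => ?_
  obtain ⟨a, ha⟩ := Fin.exists_succAbove_eq (Fin.succ_ne_zero α).symm
  rw [hc _ a (by simp [Fin.removeNth, ha]), map_zero, Finsupp.zero_apply]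

theorem IsSkew.grad_apply_comp {c : Cochain X V k} (hc : IsSkew c) (grad : V →ₗ[R] (X →₀ V))
    {ρ : Perm (Fin (k + 1))} (hρ : ρ 0 = 0) (z : Fin (k + 1) → X) :
    grad (c (Fin.tail (z ∘ ρ))) (z (ρ 0)) = (Perm.sign ρ : ℤ) • grad (c (Fin.tail z)) (z 0) := by
  obtain ⟨⟨p, e⟩, rfl⟩ := Perm.decomposeFin.symm.surjective ρ
  obtain rfl : p = 0 := by simpa using hρ
  have htail : Fin.tail (z ∘ Perm.decomposeFin.symm (0, e)) = Fin.tail z ∘ e := by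
    ext b; simp [Fin.tail]
  rw [htail, hc.apply_comp, map_zsmul]
  simp

protected theorem IsSkew.extDiff {c : Cochain X V k} (hc : IsSkew c) (grad : V →ₗ[R] (X →₀ V)) :
    IsSkew (extDiff grad c) := by
  refine isSkew_iff_apply_comp.2 fun τ z => ?_
  rw [extDiff_apply, extDiff_apply, Finset.smul_sum,
    ← Equiv.sum_comp τ fun α => _ • _ • grad (c (α.removeNth z)) (z α)]
  refine Finset.sum_congr rfl fun α _ => ?_
  have htail (z : Fin (k + 1) → X) (α : Fin (k + 1)) :
      α.removeNth z = Fin.tail (z ∘ α.cycleRange.symm) := by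
    rw [← Fin.cons_removeNth_eq_comp_cycleRange_symm, Fin.tail_cons]
  let ρ : Perm (Fin (k + 1)) := (τ α).cycleRange * τ * α.cycleRange.symm
  have hρ : (z ∘ τ) ∘ α.cycleRange.symm = (z ∘ (τ α).cycleRange.symm) ∘ ρ := by
    ext b; simp [ρ]
  have hgrad := hc.grad_apply_comp grad (ρ := ρ) (by simp [ρ]) (z ∘ (τ α).cycleRange.symm)
  have hsq (u : ℤˣ) : (u : ℤ) * u = 1 := by rw [← Units.val_mul, Int.units_mul_self, Units.val_one]
  have hsign : (-1 : ℤ) ^ (α : ℕ) * Perm.sign ρ = Perm.sign τ * (-1) ^ (τ α : ℕ) := by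
    have hα := hsq (Perm.sign α.cycleRange)
    simp only [ρ, Perm.sign_mul, Perm.sign_symm, Fin.sign_cycleRange, Units.val_mul] at hα ⊢
    push_cast at hα ⊢
    linear_combination ((-1 : ℤ) ^ (τ α : ℕ) * Perm.sign τ) * hα
  rw [smul_smul, ← hsign, mul_smul, htail z, htail (z ∘ τ), hρ]
  simpa [ρ] using congr_arg _ hgrad

theorem extDiff_extDiff (grad : V →ₗ[R] (X →₀ V))
    (hcomm : ∀ v x y, grad (grad v x) y = grad (grad v y) x) (c : Cochain X V k) :
    extDiff grad (extDiff grad c) = 0 := by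
  ext z
  simp only [extDiff_apply, map_sum, map_zsmul, finsetSum_apply, Finsupp.smul_apply,
    Finset.smul_sum]
  rw [Fin.sum_sum_eq_sum_triangle_add]
  refine Finset.sum_eq_zero fun i _ => Finset.sum_eq_zero fun j hj => ?_
  rw [Finset.mem_Ici] at hj
  have hi : i.castSucc.removeNth z j = z j.succ := by
    simp [Fin.removeNth_apply, Fin.succAbove_of_le_castSucc, hj]
  have hj' : j.succ.removeNth z i = z i.castSucc := by
    simp [Fin.removeNth_apply, Fin.succAbove_of_castSucc_lt, hj]
  have hij : i.removeNth (j.succ.removeNth z) = j.removeNth (i.castSucc.removeNth z) := by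
    rw [Fin.removeNth_removeNth_eq_swap]
    simp [Fin.predAbove, hj, Fin.succAbove]
  rw [hi, hj', hij, hcomm _ (z j.succ)]
  simp only [Fin.val_castSucc, Fin.val_succ, pow_succ, mul_neg, mul_one, neg_smul]
  rw [smul_comm, ← sub_eq_add_neg, sub_self]

end ExtDiff

section Transport

variable {F I J X V : Type*} [Field F] [AddCommGroup V] [Module F V] {k : ℕ}

/-- The array `t ⊗ v` with entries `t y • v`. -/
noncomputable def outer : (X →₀ F) →ₗ[F] V →ₗ[F] (X →₀ V) :=
  linearCombination F fun x => (lsingle x : V →ₗ[F] (X →₀ V))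

@[simp]
theorem outer_apply (t : X →₀ F) (v : V) (x : X) : outer t v x = t x • v := by
  induction t using Finsupp.induction_linear with
  | zero => simp
  | add s t hs ht => simp only [map_add, LinearMap.add_apply, Finsupp.add_apply, hs, ht, add_smul]
  | single y f => by_cases h : x = y <;> simp [outer, h]

theorem outer_single (x : X) (v : V) : outer (single x (1 : F)) v = single x v := by
  simp [outer]

/-- The array `w_1 ⊗ ⋯ ⊗ w_k` with entries `∏ a, w_a (x_a)`. -/
noncomputable def tensor : MultilinearMap F (fun _ : Fin k => X →₀ F) (Cochain X F k) :=
  open Classical in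
  MultilinearMap.mk'
    (fun w => onFinset (Fintype.piFinset fun a => (w a).support) (fun x => ∏ a, w a (x a))
      fun x hx => Fintype.mem_piFinset.2 fun a =>
        mem_support_iff.2 (Finset.prod_ne_zero_iff.1 hx a (Finset.mem_univ a)))
    (fun w a s t => by
      ext x
      exact ((MultilinearMap.mkPiAlgebra F (Fin k) F).compLinearMap
        fun b => lapply (x b)).map_update_add w a s t)
    (fun w a f t => by
      ext x
      exact ((MultilinearMap.mkPiAlgebra F (Fin k) F).compLinearMap
        fun b => lapply (x b)).map_update_smul w a f t)

@[simp]
theorem tensor_apply (w : Fin k → X →₀ F) (x : Fin k → X) : tensor w x = ∏ a, w a (x a) :=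
  rfl

theorem tensor_single (x : Fin k → X) : tensor (fun a => single (x a) (1 : F)) = single x 1 := by
  ext y
  by_cases h : y = x
  · simp [h]
  · obtain ⟨a, ha⟩ := Function.ne_iff.1 h
    rw [tensor_apply, single_eq_of_ne h]
    exact Finset.prod_eq_zero (Finset.mem_univ a) (single_eq_of_ne ha)

/-- The map `φ ⊗ ⋯ ⊗ φ ⊗ id_V` on arrays, which changes the index set from `J` to `X`. -/
noncomputable def transport (φ : (J →₀ F) →ₗ[F] (X →₀ F)) : Cochain J V k →ₗ[F] Cochain X V k :=
  lsum ℕ fun j => outer (tensor fun a => φ (single (j a) 1))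

theorem transport_single (φ : (J →₀ F) →ₗ[F] (X →₀ F)) (j : Fin k → J) (v : V) :
    transport φ (single j v) = outer (tensor fun a => φ (single (j a) 1)) v := by
  simp [transport]

theorem transport_outer_tensor (φ : (J →₀ F) →ₗ[F] (X →₀ F)) (w : Fin k → J →₀ F) (v : V) :
    transport φ (outer (tensor w) v) = outer (tensor fun a => φ (w a)) v := by
  let lhs := ((transport φ ∘ₗ outer.flip v : Cochain J F k →ₗ[F] Cochain X V k)).compMultilinearMap
    (tensor (k := k))
  let rhs := ((outer.flip v).compMultilinearMap (tensor (k := k))).compLinearMap fun _ => φ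
  suffices lhs = rhs from DFunLike.congr_fun this w
  refine Module.Basis.ext_multilinear (fun _ => Finsupp.basisSingleOne) fun j => ?_
  simp [lhs, rhs, tensor_single, transport_single, outer_single]

theorem transport_transport (ψ : (J →₀ F) →ₗ[F] (X →₀ F)) (φ : (I →₀ F) →ₗ[F] (J →₀ F))
    (c : Cochain I V k) : transport ψ (transport φ c) = transport (ψ ∘ₗ φ) c := by
  induction c using Finsupp.induction_linear with
  | zero => simp
  | add b c hb hc => simp only [map_add, hb, hc]
  | single i v => simp [transport_single, transport_outer_tensor]

theorem transport_id (c : Cochain X V k) : transport (LinearMap.id : (X →₀ F) →ₗ[F] _) c = c := by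
  induction c using Finsupp.induction_linear with
  | zero => simp
  | add b c hb hc => simp only [map_add, hb, hc]
  | single x v => simp [transport_single, tensor_single, outer_single]

/-- The identification of arrays induced by a change of basis of `X →₀ F`. -/
noncomputable def transportEquiv (φ : (J →₀ F) ≃ₗ[F] (X →₀ F)) :
    Cochain J V k ≃ₗ[F] Cochain X V k :=
  LinearEquiv.ofLinearMap (transport φ.toLinearMap) (transport φ.symm.toLinearMap)
    (LinearMap.ext fun c => by simp [transport_transport, transport_id])
    (LinearMap.ext fun c => by simp [transport_transport, transport_id])

theorem transport_apply_mem (φ : (J →₀ F) →ₗ[F] (X →₀ F)) {c : Cochain J V k} {S : Submodule F V}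
    (hc : ∀ j, c j ∈ S) (x : Fin k → X) : transport φ c x ∈ S := by
  rw [transport, lsum_apply, Finsupp.sum_apply]
  exact Submodule.sum_mem _ fun j _ => by
    simpa using S.smul_mem _ (hc j)

theorem transport_permute_single (φ : (J →₀ F) →ₗ[F] (X →₀ F)) (σ : Perm (Fin k)) (j : Fin k → J)
    (v : V) : transport φ (permute σ (single j v)) = permute σ (transport φ (single j v)) := by
  ext x
  rw [permute_single, permute_apply, transport_single, transport_single, outer_apply, outer_apply,
    tensor_apply, tensor_apply, ← Equiv.prod_comp σ]
  simp

protected theorem IsSkew.transport {c : Cochain J V k} (hc : IsSkew c)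
    (φ : (J →₀ F) →ₗ[F] (X →₀ F)) : IsSkew (transport φ c) :=
  hc.map (transport φ).toAddMonoidHom (transport_permute_single φ)

theorem isSkew_transportEquiv {φ : (J →₀ F) ≃ₗ[F] (X →₀ F)} {c : Cochain J V k} :
    IsSkew (transportEquiv φ c) ↔ IsSkew c :=
  ⟨fun h => (transportEquiv φ).symm_apply_apply c ▸ h.transport φ.symm.toLinearMap,
    fun h => h.transport _⟩

/-- The map `φ ⊗ id_V`, that is `transport φ` in degree one without the passage to arrays. -/
noncomputable def tensorId (V : Type*) [AddCommGroup V] [Module F V] (φ : (J →₀ F) →ₗ[F] (X →₀ F)) :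
    (J →₀ V) →ₗ[F] (X →₀ V) :=
  lsum ℕ fun j => outer (φ (single j 1))

theorem transport_insertDiff (φ : (J →₀ F) →ₗ[F] (X →₀ F)) (grad : V →ₗ[F] (J →₀ V))
    (α : Fin (k + 1)) (c : Cochain J V k) :
    transport φ (insertDiff grad α c) = insertDiff (tensorId V φ ∘ₗ grad) α (transport φ c) := by
  induction c using Finsupp.induction_linear with
  | zero => simp
  | add b c hb hc => simp only [map_add, hb, hc]
  | single j v =>
    ext z
    rw [insertDiff_single, insertDiff_apply, transport_single, outer_apply, map_smul,
      LinearMap.comp_apply]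
    induction grad v using Finsupp.induction_linear with
    | zero => simp
    | add s t hs ht =>
      simp only [mapDomain_add, map_add, Finsupp.add_apply, hs, ht, smul_add]
    | single i u =>
      simp only [mapDomain_single, transport_single, tensorId, lsum_single, outer_apply,
        tensor_apply, Fin.prod_univ_succAbove _ α, Fin.insertNth_apply_same,
        Fin.insertNth_apply_succAbove, Fin.removeNth]
      rw [mul_smul, smul_comm, Finsupp.smul_apply, outer_apply]

theorem transport_extDiff (φ : (J →₀ F) →ₗ[F] (X →₀ F)) (grad : V →ₗ[F] (J →₀ V))
    (c : Cochain J V k) :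
    transport φ (extDiff grad c) = extDiff (tensorId V φ ∘ₗ grad) (transport φ c) := by
  simp only [extDiff, LinearMap.sum_apply, LinearMap.smul_apply, map_sum, map_zsmul,
    transport_insertDiff]

theorem transport_lcomapDomain_apply (f : J → X) (hf : f.Injective) (c : Cochain X V k)
    (j : Fin k → J) : transport (lcomapDomain f hf : (X →₀ F) →ₗ[F] (J →₀ F)) c j = c (f ∘ j) := by
  induction c using Finsupp.induction_linear with
  | zero => simp
  | add b c hb hc => simp only [map_add, Finsupp.add_apply, hb, hc]
  | single x v =>
    calc transport (lcomapDomain f hf : (X →₀ F) →ₗ[F] (J →₀ F)) (single x v) j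
        = outer (tensor fun a => single (x a) (1 : F)) v (f ∘ j) := by
          rw [transport_single, outer_apply, outer_apply]; rfl
      _ = single x v (f ∘ j) := by rw [tensor_single, outer_single]

end Transport

section Poincare

variable {F E V : Type*} [Field F] [AddCommGroup V] [Module F V] {k : ℕ}

/-- The map `grad`, its coordinates `ℕ` being complemented by coordinates `E` in which all
derivatives vanish. -/
noncomputable def adaptedGrad (E : Type*) (grad : V →ₗ[F] (ℕ →₀ V)) : V →ₗ[F] (ℕ ⊕ E →₀ V) :=
  lmapDomain V F Sum.inl ∘ₗ grad

@[simp]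
theorem adaptedGrad_inl (grad : V →ₗ[F] (ℕ →₀ V)) (v : V) (t : ℕ) :
    adaptedGrad E grad v (Sum.inl t) = grad v t :=
  mapDomain_apply Sum.inl_injective _ _

@[simp]
theorem adaptedGrad_inr (grad : V →ₗ[F] (ℕ →₀ V)) (v : V) (e : E) :
    adaptedGrad E grad v (Sum.inr e) = 0 :=
  mapDomain_of_notMem_range _ _ (by simp)

/-- `grad v t` is the `t`-th partial derivative of `v` in an enumeration of the variables; this
condition says that partial derivatives commute and that `v` has an antiderivative with respect to
its last variable, or any later one, which involves no further variables. -/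
structure IsNormalGrad (grad : V →ₗ[F] (ℕ →₀ V)) : Prop where
  comm (v : V) (s t : ℕ) : grad (grad v s) t = grad (grad v t) s
  exists_antiderivative (t : ℕ) (v : V) (hv : grad v ∈ supported V F (Set.Iic t)) :
    ∃ w, grad w ∈ supported V F (Set.Iic t) ∧ grad w t = v

variable {grad : V →ₗ[F] (ℕ →₀ V)}

theorem IsNormalGrad.exists_linear_antiderivative (h : IsNormalGrad grad) (t : ℕ) :
    ∃ L : V →ₗ[F] V, ∀ v, grad v ∈ supported V F (Set.Iic t) →
      grad (L v) ∈ supported V F (Set.Iic t) ∧ grad (L v) t = v := by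
  let S := (supported V F (Set.Iic t)).comap grad
  have hS : ∀ v ∈ S, (lapply t ∘ₗ grad) v ∈ S := fun v hv => (mem_supported' F _).2 fun s hs => by
    rw [LinearMap.comp_apply, lapply_apply, h.comm, (mem_supported' F _).1 hv s hs, map_zero,
      Finsupp.zero_apply]
  obtain ⟨g, hg⟩ := ((lapply t ∘ₗ grad).restrict hS).exists_rightInverse_of_surjective <|
    LinearMap.range_eq_top.2 fun ⟨v, hv⟩ => by
      obtain ⟨w, hw, hwv⟩ := h.exists_antiderivative t v hv
      exact ⟨⟨w, hw⟩, Subtype.ext hwv⟩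
  obtain ⟨L, hL⟩ := (S.subtype ∘ₗ g).exists_extend
  refine ⟨L, fun v hv => ?_⟩
  have hLv : L v = g ⟨v, hv⟩ := LinearMap.congr_fun hL ⟨v, hv⟩
  rw [hLv]
  exact ⟨(g ⟨v, hv⟩).2, congr_arg Subtype.val (LinearMap.congr_fun hg ⟨v, hv⟩)⟩

theorem IsNormalGrad.adaptedGrad_comm (h : IsNormalGrad grad) (v : V) (x y : ℕ ⊕ E) :
    adaptedGrad E grad (adaptedGrad E grad v x) y =
      adaptedGrad E grad (adaptedGrad E grad v y) x := by
  cases x <;> cases y <;> simp [h.comm v]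

theorem extDiff_adaptedGrad_apply_inr (c : Cochain (ℕ ⊕ E) V k) (e : Fin (k + 1) → E) :
    extDiff (adaptedGrad E grad) c (Sum.inr ∘ e) = 0 := by
  simp [extDiff_apply]

theorem grad_apply_inr_eq_zero_of_closed {c : Cochain (ℕ ⊕ E) V k}
    (hc : extDiff (adaptedGrad E grad) c = 0) (e : Fin k → E) : grad (c (Sum.inr ∘ e)) = 0 := by
  ext t
  rw [← adaptedGrad_inl (E := E), ← extDiff_apply_cons, hc, Finsupp.zero_apply, Finsupp.zero_apply]
  simp

/-- All the entries of `c` with an index `inl s`, `s ≥ t`, vanish. -/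
def VanishesFrom (t : ℕ) (c : Cochain (ℕ ⊕ E) V k) : Prop :=
  ∀ s ≥ t, ∀ j : Fin k → ℕ ⊕ E, ∀ a, j a = Sum.inl s → c j = 0

theorem exists_vanishesFrom (c : Cochain (ℕ ⊕ E) V k) : ∃ t, VanishesFrom t c := by
  have hfin : {s | ∃ j ∈ c.support, ∃ a, j a = Sum.inl s}.Finite := by
    refine ((c.support.finite_toSet.biUnion fun j _ => Set.finite_range j).preimage
      Sum.inl_injective.injOn).subset ?_
    rintro s ⟨j, hj, a, hja⟩
    exact Set.mem_biUnion hj ⟨a, hja⟩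
  obtain ⟨t, ht⟩ := hfin.bddAbove
  refine ⟨t + 1, fun s hs j a hja => by_contra fun hj => ?_⟩
  have := ht ⟨j, mem_support_iff.2 hj, a, hja⟩
  omega

theorem VanishesFrom.grad_mem_supported {t : ℕ} {c : Cochain (ℕ ⊕ E) V k}
    (hc : VanishesFrom (t + 1) c) (hclosed : extDiff (adaptedGrad E grad) c = 0)
    (j : Fin k → ℕ ⊕ E) : grad (c j) ∈ supported V F (Set.Iic t) := by
  refine (mem_supported' F _).2 fun s hs => ?_
  rw [← adaptedGrad_inl (E := E),
    ← extDiff_apply_cons_of_eq_zero _ c _ (hc s (by simpa using hs)), hclosed, Finsupp.zero_apply]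

protected theorem VanishesFrom.extDiff {t : ℕ} {c : Cochain (ℕ ⊕ E) V k}
    (hc : VanishesFrom (t + 1) c) (hgrad : ∀ j, grad (c j) ∈ supported V F (Set.Iic t)) :
    VanishesFrom (t + 1) (extDiff (adaptedGrad E grad) c) := by
  intro s hs j a hja
  rw [extDiff_apply]
  refine Finset.sum_eq_zero fun α _ => ?_
  by_cases haα : a = α
  · rw [← haα, hja, adaptedGrad_inl, (mem_supported' F _).1 (hgrad _) s (by simpa using hs),
      smul_zero]
  · obtain ⟨b, rfl⟩ := Fin.exists_succAbove_eq haα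
    rw [hc s hs _ b hja, map_zero, Finsupp.zero_apply, smul_zero]

theorem eq_zero_of_vanishesFrom_zero {c : Cochain (ℕ ⊕ E) V k} (hc : VanishesFrom 0 c)
    (hinr : ∀ e : Fin k → E, c (Sum.inr ∘ e) = 0) : c = 0 := by
  ext j
  by_cases hj : ∃ a s, j a = Sum.inl s
  · obtain ⟨a, s, hjs⟩ := hj
    exact hc s s.zero_le j a hjs
  · have hj' (a) : ∃ e, j a = Sum.inr e := by
      cases hja : j a with
      | inl s => exact absurd ⟨a, s, hja⟩ hj
      | inr e => exact ⟨e, rfl⟩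
    choose e he using hj'
    rw [show j = Sum.inr ∘ e from funext he, hinr, Finsupp.zero_apply]

variable [IsAddTorsionFree V]

protected theorem VanishesFrom.contract {t : ℕ} {c : Cochain (ℕ ⊕ E) V (k + 1)}
    (hc : VanishesFrom (t + 1) c) (hskew : IsSkew c) : VanishesFrom t (contract (Sum.inl t) c) := by
  intro s hs j a hja
  rw [contract_apply]
  rcases hs.eq_or_lt with rfl | hs
  · exact hskew.eq_zero_of_eq (Fin.succ_ne_zero a) (by simp [hja])
  · exact hc s hs _ a.succ (by simp [hja])

/-- One index at a time: subtracting `δ` of an antiderivative of the contraction of `c` with `inl t`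
removes the index `inl t`. -/
theorem VanishesFrom.exists_sub_extDiff (h : IsNormalGrad grad) {t : ℕ}
    {c : Cochain (ℕ ⊕ E) V (k + 1)} (hc : VanishesFrom (t + 1) c) (hskew : IsSkew c)
    (hclosed : extDiff (adaptedGrad E grad) c = 0) :
    ∃ r : Cochain (ℕ ⊕ E) V k, IsSkew r ∧
      VanishesFrom t (c - extDiff (adaptedGrad E grad) r) := by
  obtain ⟨L, hL⟩ := h.exists_linear_antiderivative t
  let r := mapRange.linearMap L (contract (Sum.inl t) c)
  have hr_skew : IsSkew r := (hskew.contract _).map (mapRange.linearMap L).toAddMonoidHom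
    fun σ x v => by simp [permute_single]
  have hr : VanishesFrom t r := fun s hs j a hja => by
    simp [r, -contract_apply, hc.contract hskew s hs j a hja]
  have hr_grad (j) : grad (r j) ∈ supported V F (Set.Iic t) ∧
      grad (r j) t = c (Fin.cons (Sum.inl t) j) :=
    hL _ (hc.grad_mem_supported hclosed (Fin.cons (Sum.inl t) j))
  refine ⟨r, hr_skew, fun s hs j a hja => ?_⟩
  have hdr_skew := hr_skew.extDiff (adaptedGrad E grad)
  rcases hs.eq_or_lt with rfl | hs
  · rw [Finsupp.sub_apply, hskew.apply_eq_smul_cons j a, hdr_skew.apply_eq_smul_cons j a, hja,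
      extDiff_apply_cons_of_eq_zero _ r _ (hr t le_rfl), adaptedGrad_inl, (hr_grad _).2, sub_self]
  · have hdr := VanishesFrom.extDiff (fun s hs => hr s (Nat.le_of_succ_le hs))
      fun j => (hr_grad j).1
    rw [Finsupp.sub_apply, hc s hs j a hja, hdr s hs j a hja, sub_zero]

theorem exists_extDiff_eq_of_closed (h : IsNormalGrad grad) {c : Cochain (ℕ ⊕ E) V (k + 1)}
    (hskew : IsSkew c) (hclosed : extDiff (adaptedGrad E grad) c = 0)
    (hinr : ∀ e : Fin (k + 1) → E, c (Sum.inr ∘ e) = 0) :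
    ∃ b : Cochain (ℕ ⊕ E) V k, IsSkew b ∧ extDiff (adaptedGrad E grad) b = c := by
  obtain ⟨t, ht⟩ := exists_vanishesFrom c
  induction t generalizing c with
  | zero => exact ⟨0, (skewCochains F _ _ _).zero_mem,
      by rw [map_zero, eq_zero_of_vanishesFrom_zero ht hinr]⟩
  | succ t ih =>
    obtain ⟨r, hr, hcr⟩ := ht.exists_sub_extDiff h hskew hclosed
    obtain ⟨b, hb, hbc⟩ := ih
      ((skewCochains F _ _ _).sub_mem hskew (hr.extDiff (adaptedGrad E grad)))
      (by rw [map_sub, hclosed, extDiff_extDiff _ h.adaptedGrad_comm, sub_zero])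
      (fun e => by rw [Finsupp.sub_apply, hinr, extDiff_adaptedGrad_apply_inr, sub_zero]) hcr
    exact ⟨b + r, (skewCochains F _ _ _).add_mem hb hr, by rw [map_add, hbc, sub_add_cancel]⟩

end Poincare

section TotalDeriv

variable {C F E X V : Type*} [CommRing C] [Field F] [AddCommGroup V] [Module C V] [Module F V]
  {k : ℕ}

/-- The total derivative `∂ + λ_1 + ⋯ + λ_k` of arrays: `pd` is applied to the entries, and the
injection `shift`, which is `(n, i) ↦ (n + 1, i)` for `X = ℕ × Fin ℓ`, to the indices in turn. -/
noncomputable def totalDeriv (pd : V →ₗ[C] V) (shift : X → X) :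
    Cochain X V k →ₗ[C] Cochain X V k :=
  mapRange.linearMap pd +
    ∑ a : Fin k, lmapDomain V C fun x => Function.update x a (shift (x a))

theorem totalDeriv_single (pd : V →ₗ[C] V) (shift : X → X) (x : Fin k → X) (v : V) :
    totalDeriv pd shift (single x v) =
      single x (pd v) + ∑ a, single (Function.update x a (shift (x a))) v := by
  simp [totalDeriv, mapDomain_single]

protected theorem IsSkew.totalDeriv {c : Cochain X V k} (hc : IsSkew c) (pd : V →ₗ[C] V)
    (shift : X → X) : IsSkew (totalDeriv pd shift c) := by
  refine hc.map (totalDeriv pd shift).toAddMonoidHom fun σ x v => ?_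
  simp only [LinearMap.toAddMonoidHom_coe, permute_single, totalDeriv_single, map_add, map_sum]
  have hupdate (a : Fin k) : Function.update (x ∘ ⇑σ⁻¹) a (shift ((x ∘ ⇑σ⁻¹) a)) =
      Function.update x (σ⁻¹ a) (shift (x (σ⁻¹ a))) ∘ ⇑σ⁻¹ := by
    rw [Function.comp_apply, ← Function.update_comp_eq_of_injective _ (σ⁻¹).injective]
  simp only [hupdate]
  rw [Equiv.sum_comp σ⁻¹ fun a => single (Function.update x a (shift (x a)) ∘ ⇑σ⁻¹) v]

theorem update_shift_injective {shift : X → X} (hshift : shift.Injective) (a : Fin k) :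
    Function.Injective fun x : Fin k → X => Function.update x a (shift (x a)) := by
  intro x y hxy
  ext b
  have hb := congr_fun hxy b
  by_cases hba : b = a
  · subst hba
    exact hshift (by simpa using hb)
  · simpa [hba] using hb

theorem totalDeriv_injective (pd : V →ₗ[C] V) {shift : X → X} (hshift : shift.Injective)
    {degree : X → ℕ} (hdegree : ∀ x, degree x < degree (shift x)) :
    Function.Injective (totalDeriv pd shift : Cochain X V (k + 1) →ₗ[C] _) := by
  refine (injective_iff_map_eq_zero _).2 fun c hc => ?_
  by_contra hne
  obtain ⟨x, hx, hmax⟩ := c.support.exists_max_image (fun x => degree (x 0))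
    (support_nonempty_iff.2 hne)
  have hzero (y : Fin (k + 1) → X) (hy : y 0 = shift (x 0)) : c y = 0 := by
    by_contra hcy
    exact (hdegree (x 0)).not_ge (hy ▸ hmax y (mem_support_iff.2 hcy))
  let up (a : Fin (k + 1)) (y : Fin (k + 1) → X) := Function.update y a (shift (y a))
  have htop : totalDeriv pd shift c (up 0 x) = c x := by
    rw [totalDeriv, LinearMap.add_apply, Finsupp.add_apply, mapRange.linearMap_apply,
      mapRange_apply, hzero _ (by simp [up]), map_zero, zero_add, LinearMap.sum_apply,
      finsetSum_apply, Fin.sum_univ_succ, Finset.sum_eq_zero, add_zero]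
    · exact mapDomain_apply (update_shift_injective hshift 0) c x
    · intro a _
      rw [lmapDomain_apply, mapDomain, Finsupp.sum_apply]
      refine Finset.sum_eq_zero fun y hy => single_eq_of_ne fun hyx => ?_
      have hy0 := congr_fun hyx 0
      simp only [up, Function.update_self] at hy0
      exact mem_support_iff.1 hy (hzero y hy0.symm)
  exact mem_support_iff.1 hx (by rw [← htop, hc, Finsupp.zero_apply])

/-- The total derivative on arrays with a single index. -/
noncomputable def totalDeriv₁ (pd : V →ₗ[C] V) (shift : X → X) : (X →₀ V) →ₗ[C] (X →₀ V) :=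
  mapRange.linearMap pd + lmapDomain V C shift

theorem totalDeriv_insertDiff (pd : V →ₗ[C] V) (shift : X → X) (grad : V →ₗ[F] (X →₀ V))
    (hgrad : ∀ v, grad (pd v) = totalDeriv₁ pd shift (grad v)) (α : Fin (k + 1))
    (c : Cochain X V k) :
    totalDeriv pd shift (insertDiff grad α c) = insertDiff grad α (totalDeriv pd shift c) := by
  induction c using Finsupp.induction_linear with
  | zero => simp
  | add b c hb hc => simp only [map_add, hb, hc]
  | single x v =>
    rw [totalDeriv_single, map_add, map_sum]
    simp only [insertDiff_single, hgrad]
    induction grad v using Finsupp.induction_linear with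
    | zero => simp
    | add s t hs ht =>
      simp only [map_add, mapDomain_add, hs, ht, Finset.sum_add_distrib]
      abel
    | single y u =>
      simp [totalDeriv₁, totalDeriv_single, mapDomain_single, mapDomain_add,
        Fin.sum_univ_succAbove _ α, add_assoc]

theorem totalDeriv_extDiff (pd : V →ₗ[C] V) (shift : X → X) (grad : V →ₗ[F] (X →₀ V))
    (hgrad : ∀ v, grad (pd v) = totalDeriv₁ pd shift (grad v)) (c : Cochain X V k) :
    totalDeriv pd shift (extDiff grad c) = extDiff grad (totalDeriv pd shift c) := by
  simp only [extDiff, LinearMap.sum_apply, LinearMap.smul_apply, map_sum, map_zsmul,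
    totalDeriv_insertDiff pd shift grad hgrad]

variable [Algebra C F]

theorem derivation_prod (d : Derivation C F F) (f : Fin k → F) :
    d (∏ a, f a) = ∑ a, ∏ b, Function.update f a (d (f a)) b := by
  induction k with
  | zero => simp
  | succ k ih =>
    have hupdate (a b : Fin k) : Function.update f a.succ (d (f a.succ)) b.succ =
        Function.update (fun b => f b.succ) a (d (f a.succ)) b :=
      congr_fun (Function.update_comp_eq_of_injective f (Fin.succ_injective k) a _) b
    have hupdate_zero (a : Fin k) : Function.update f a.succ (d (f a.succ)) 0 = f 0 :=
      Function.update_of_ne (Fin.succ_ne_zero a).symm _ _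
    simp [Fin.prod_univ_succ, Fin.sum_univ_succ, ih, Finset.mul_sum, hupdate, hupdate_zero,
      mul_comm, add_comm]

theorem transport_totalDeriv {d : Derivation C F F} {pd : V →ₗ[C] V}
    (hpd : ∀ (f : F) v, pd (f • v) = d f • v + f • pd v) {shift : X → X}
    {ε : (X →₀ F) →ₗ[F] (E →₀ F)}
    (hε : ∀ x e, ε (single (shift x) 1) e = d (ε (single x 1) e)) (c : Cochain X V k) :
    transport ε (totalDeriv pd shift c) = mapRange.linearMap pd (transport ε c) := by
  induction c using Finsupp.induction_linear with
  | zero => simp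
  | add b c hb hc => simp only [map_add, hb, hc]
  | single x v =>
    ext e
    simp only [totalDeriv_single, map_add, map_sum, transport_single, Finsupp.add_apply,
      finsetSum_apply, outer_apply, tensor_apply, mapRange.linearMap_apply, mapRange_apply, hpd]
    rw [derivation_prod, add_comm, Finset.sum_smul]
    congr! 3 with a _
    refine Finset.prod_congr rfl fun b _ => ?_
    rcases eq_or_ne b a with rfl | hba
    · simp [hε]
    · simp [hba]

end TotalDeriv

section Alternating

variable {X V : Type*} [AddCommGroup V] {k : ℕ}

theorem permute_permute (τ σ : Perm (Fin k)) (c : Cochain X V k) :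
    permute τ (permute σ c) = permute (τ * σ) c := by
  ext x
  simp only [permute_apply, Perm.coe_mul, Function.comp_assoc]

/-- The alternating sum of the permutations of an array. -/
noncomputable def alternate (c : Cochain X V k) : Cochain X V k :=
  ∑ σ : Perm (Fin k), (Perm.sign σ : ℤ) • permute σ c

theorem isSkew_alternate (c : Cochain X V k) : IsSkew (alternate c) := by
  intro τ
  have hsign (σ : Perm (Fin k)) :
      (Perm.sign σ : ℤ) = (Perm.sign τ : ℤ) * (Perm.sign (τ * σ) : ℤ) := by
    rw [Perm.sign_mul, Units.val_mul, ← mul_assoc, ← Units.val_mul, Int.units_mul_self,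
      Units.val_one, one_mul]
  simp only [alternate, map_sum, map_zsmul, permute_permute, Finset.smul_sum, smul_smul]
  exact Fintype.sum_equiv (Equiv.mulLeft τ) _ _ fun σ => by rw [hsign σ]; rfl

theorem orderEmbedding_comp_strictMono_iff [LinearOrder X] (f : Fin k ↪o X) (σ : Perm (Fin k)) :
    StrictMono (f ∘ σ) ↔ σ = 1 := by
  refine ⟨fun h => ?_, fun h => by simpa [h] using f.strictMono⟩
  exact (Perm.monotone_iff σ).1 fun a b hab => f.le_iff_le.1 (h.monotone hab)

theorem alternate_apply_orderEmbedding [LinearOrder X] {c : Cochain X V k}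
    (hc : ∀ x, ¬StrictMono x → c x = 0) (f : Fin k ↪o X) : alternate c f = c f := by
  rw [alternate, finsetSum_apply, Finset.sum_eq_single 1]
  · simp [permute_apply]
  · intro σ _ hσ
    rw [coe_smul, Pi.smul_apply, permute_apply,
      hc _ (mt (orderEmbedding_comp_strictMono_iff f σ).1 hσ), smul_zero]
  · simp

theorem IsSkew.eq_zero_of_orderEmbedding [IsAddTorsionFree V] [LinearOrder X] {c : Cochain X V k}
    (hc : IsSkew c) (h : ∀ f : Fin k ↪o X, c f = 0) : c = 0 := by
  ext x
  by_cases hx : x.Injective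
  · have hmono : StrictMono (x ∘ Tuple.sort x) :=
      (Tuple.monotone_sort x).strictMono_of_injective (hx.comp (Tuple.sort x).injective)
    have hsort := h (OrderEmbedding.ofStrictMono _ hmono)
    rwa [OrderEmbedding.coe_ofStrictMono, hc.apply_comp, ← Units.smul_def, smul_eq_zero_iff_eq]
      at hsort
  · obtain ⟨a, b, hxab, hab⟩ := Function.not_injective_iff.1 hx
    exact hc.eq_zero_of_eq hab hxab

variable {R : Type*} [CommRing R] [Module R V]

/-- The skewsymmetric arrays with entries in the submodule `W`. -/
noncomputable def skewCochainsIn (X : Type*) (W : Submodule R V) (k : ℕ) :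
    Submodule R (Cochain X V k) :=
  skewCochains R X V k ⊓ ⨅ x, W.comap (lapply x)

theorem mem_skewCochainsIn {W : Submodule R V} {c : Cochain X V k} :
    c ∈ skewCochainsIn X W k ↔ IsSkew c ∧ ∀ x, c x ∈ W := by
  simp [skewCochainsIn]

variable [LinearOrder X]

/-- Restriction of a skewsymmetric array to strictly increasing sequences of indices. -/
noncomputable def increasingEntries (X : Type*) [LinearOrder X] (W : Submodule R V) (k : ℕ) :
    skewCochainsIn X W k →ₗ[R] (Fin k ↪o X) → W where
  toFun c f := ⟨c.1 f, (mem_skewCochainsIn.1 c.2).2 f⟩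
  map_add' _ _ := rfl
  map_smul' _ _ := rfl

theorem increasingEntries_injective [IsAddTorsionFree V] (W : Submodule R V) :
    Function.Injective (increasingEntries X W k) :=
  (injective_iff_map_eq_zero _).2 fun c hc => Subtype.ext <|
    (mem_skewCochainsIn.1 c.2).1.eq_zero_of_orderEmbedding fun f =>
      congr_arg Subtype.val (congr_fun hc f)

theorem increasingEntries_surjective [Finite X] (W : Submodule R V) :
    Function.Surjective (increasingEntries X W k) := by
  intro w
  classical
  let c : Cochain X V k := equivFunOnFinite.symm fun x =>
    if hx : StrictMono x then w (OrderEmbedding.ofStrictMono x hx) else 0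
  have hcW (x : Fin k → X) : c x ∈ W := by
    by_cases hx : StrictMono x <;> simp [c, hx]
  refine ⟨⟨alternate c, mem_skewCochainsIn.2 ⟨isSkew_alternate c, fun x => ?_⟩⟩, ?_⟩
  · rw [alternate, finsetSum_apply]
    exact W.sum_mem fun σ _ => zsmul_mem (by rw [permute_apply]; exact hcW _) _
  · funext f
    refine Subtype.ext ((alternate_apply_orderEmbedding (fun x hx => by simp [c, hx]) f).trans ?_)
    simp only [c, equivFunOnFinite_symm_apply_apply, f.strictMono, dif_pos]
    rfl

theorem rank_skewCochainsIn [IsAddTorsionFree V] [Finite X] [Nontrivial R] {W : Submodule R V}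
    (e : W ≃ₗ[R] R) :
    Module.rank R (skewCochainsIn X W k) = ((Nat.card X).choose k : Cardinal) := by
  let increasing := LinearEquiv.ofBijective (increasingEntries X W k)
    ⟨increasingEntries_injective W, increasingEntries_surjective W⟩
  have hcard : Nat.card (Fin k ↪o X) = (Nat.card X).choose k := by
    rw [Nat.card_congr Set.powersetCard.ofFinEmbEquiv, Set.powersetCard.card]
  have hrank := (increasing ≪≫ₗ LinearEquiv.piCongrRight fun _ => e).lift_rank_eq
  have : Finite (Fin k ↪o X) := DFunLike.finite _
  have := Fintype.ofFinite (Fin k ↪o X)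
  rw [rank_fun', Cardinal.lift_natCast, Cardinal.lift_eq_nat_iff] at hrank
  rw [hrank, ← hcard, Nat.card_eq_fintype_card]

end Alternating

section Cohomology

/-- The data from which the cohomology of the complex is computed: a differential field `F`, a
differential `F`-module `V` with partial derivatives `grad`, and a basis of `X →₀ F`, whose
vectors `basis (inl t)` are the directions `∂P/∂u_t` is inserted along by `δ`, while the
coordinates along the vectors `basis (inr e)` commute with the derivations. -/
structure AdaptedFrame (C F V X E : Type*) [CommRing C] [Field F] [Algebra C F] [AddCommGroup V]
    [Module C V] [Module F V] where
  d : Derivation C F F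
  pd : V →ₗ[C] V
  pd_smul (f : F) (v : V) : pd (f • v) = d f • v + f • pd v
  grad : V →ₗ[F] (ℕ →₀ V)
  isNormalGrad : IsNormalGrad grad
  exists_primitive (v : V) : grad v = 0 → ∃ w, grad w = 0 ∧ pd w = v
  shift : X → X
  shift_injective : shift.Injective
  degree : X → ℕ
  degree_lt (x : X) : degree x < degree (shift x)
  basis : Module.Basis (ℕ ⊕ E) F (X →₀ F)
  grad_pd (v : V) : (tensorId V basis.repr.symm.toLinearMap ∘ₗ adaptedGrad E grad) (pd v) =
    totalDeriv₁ pd shift ((tensorId V basis.repr.symm.toLinearMap ∘ₗ adaptedGrad E grad) v)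
  repr_shift (x : X) (e : E) : basis.repr (single (shift x) 1) (Sum.inr e) =
    d (basis.repr (single x 1) (Sum.inr e))

namespace AdaptedFrame

variable {C F V X E : Type*} [CommRing C] [Field F] [Algebra C F] [AddCommGroup V]
  [Module C V] [Module F V] {k : ℕ} (A : AdaptedFrame C F V X E)

/-- The differential `δ` of the complex. -/
noncomputable def diff : Cochain X V k →ₗ[F] Cochain X V (k + 1) :=
  extDiff (tensorId V A.basis.repr.symm.toLinearMap ∘ₗ adaptedGrad E A.grad)

/-- The total derivative, whose image is divided out in the complex. -/
noncomputable def total : Cochain X V k →ₗ[C] Cochain X V k :=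
  totalDeriv A.pd A.shift

/-- The coordinates of an array along the vectors `basis (inr e)`. -/
noncomputable def eval : Cochain X V k →ₗ[F] Cochain E V k :=
  transport (lcomapDomain Sum.inr Sum.inr_injective ∘ₗ A.basis.repr.toLinearMap)

/-- The section of `eval` given by the arrays in the span of the vectors `basis (inr e)`. -/
noncomputable def lift : Cochain E V k →ₗ[F] Cochain X V k :=
  transport (A.basis.repr.symm.toLinearMap ∘ₗ lmapDomain F F Sum.inr)

theorem total_injective : Function.Injective (A.total : Cochain X V (k + 1) →ₗ[C] _) :=
  totalDeriv_injective A.pd A.shift_injective A.degree_lt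

theorem total_diff (c : Cochain X V k) : A.total (A.diff c) = A.diff (A.total c) :=
  totalDeriv_extDiff A.pd A.shift _ A.grad_pd c

theorem eval_total (c : Cochain X V k) :
    A.eval (A.total c) = mapRange.linearMap A.pd (A.eval c) :=
  transport_totalDeriv A.pd_smul A.repr_shift c

theorem eval_lift (u : Cochain E V k) : A.eval (A.lift u) = u := by
  rw [eval, lift, transport_transport]
  convert transport_id u
  ext e : 2
  simp [mapDomain_single]

theorem diff_transportEquiv (c : Cochain (ℕ ⊕ E) V k) :
    A.diff (transportEquiv A.basis.repr.symm c) =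
      transportEquiv A.basis.repr.symm (extDiff (adaptedGrad E A.grad) c) :=
  (transport_extDiff A.basis.repr.symm.toLinearMap _ c).symm

theorem eval_transportEquiv_apply (c : Cochain (ℕ ⊕ E) V k) (e : Fin k → E) :
    A.eval (transportEquiv A.basis.repr.symm c) e = c (Sum.inr ∘ e) := by
  rw [← transport_lcomapDomain_apply (F := F) Sum.inr Sum.inr_injective c e]
  refine congr($(transport_transport _ _ c) e).trans ?_
  rw [LinearMap.comp_assoc, LinearEquiv.comp_symm, LinearMap.comp_id]

theorem diff_diff (c : Cochain X V k) : A.diff (A.diff c) = 0 := by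
  obtain ⟨c, rfl⟩ := (transportEquiv A.basis.repr.symm).surjective c
  rw [diff_transportEquiv, diff_transportEquiv, extDiff_extDiff _ A.isNormalGrad.adaptedGrad_comm,
    map_zero]

theorem eval_diff (c : Cochain X V k) : A.eval (A.diff c) = 0 := by
  obtain ⟨c, rfl⟩ := (transportEquiv A.basis.repr.symm).surjective c
  ext e
  rw [diff_transportEquiv, eval_transportEquiv_apply, extDiff_adaptedGrad_apply_inr,
    Finsupp.zero_apply]

variable {A}

theorem grad_eval_eq_zero {c : Cochain X V k} (hc : A.diff c = 0) (e : Fin k → E) :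
    A.grad (A.eval c e) = 0 := by
  obtain ⟨c, rfl⟩ := (transportEquiv A.basis.repr.symm).surjective c
  rw [diff_transportEquiv, LinearEquiv.map_eq_zero_iff] at hc
  rw [eval_transportEquiv_apply, grad_apply_inr_eq_zero_of_closed hc]

theorem diff_lift {u : Cochain E V k} (hu : ∀ e, A.grad (u e) = 0) : A.diff (A.lift u) = 0 := by
  have hlift : A.lift u = transportEquiv A.basis.repr.symm (transport (lmapDomain F F Sum.inr) u) :=
    (transport_transport _ _ u).symm
  rw [hlift, diff_transportEquiv, LinearEquiv.map_eq_zero_iff]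
  have hgrad (j : Fin k → ℕ ⊕ E) :
      A.grad (transport (lmapDomain F F (Sum.inr : E → ℕ ⊕ E)) u j) = 0 :=
    transport_apply_mem _ (S := LinearMap.ker A.grad) hu j
  ext z
  simp [extDiff_apply, adaptedGrad, hgrad]

theorem exists_diff_eq [IsAddTorsionFree V] {c : Cochain X V (k + 1)} (hskew : IsSkew c)
    (hc : A.diff c = 0) (heval : A.eval c = 0) : ∃ b : Cochain X V k, IsSkew b ∧ A.diff b = c := by
  obtain ⟨c, rfl⟩ := (transportEquiv A.basis.repr.symm).surjective c
  rw [diff_transportEquiv, LinearEquiv.map_eq_zero_iff] at hc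
  obtain ⟨b, hb, rfl⟩ := exists_extDiff_eq_of_closed A.isNormalGrad
    (isSkew_transportEquiv.1 hskew) hc fun e => by
      rw [← A.eval_transportEquiv_apply, heval, Finsupp.zero_apply]
  exact ⟨_, isSkew_transportEquiv.2 hb, A.diff_transportEquiv b⟩

theorem eq_zero_of_eval_eq_zero {c : Cochain X V 0} (hc : A.eval c = 0) : c = 0 := by
  obtain ⟨c, rfl⟩ := (transportEquiv A.basis.repr.symm).surjective c
  rw [LinearEquiv.map_eq_zero_iff]
  refine Finsupp.ext fun x => ?_
  rw [Subsingleton.elim x (Sum.inr ∘ finZeroElim), ← A.eval_transportEquiv_apply, hc,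
    Finsupp.zero_apply, Finsupp.zero_apply]

theorem exists_additive_primitive [Module ℚ V] (A : AdaptedFrame C F V X E) :
    ∃ s : V →+ V, ∀ v, A.grad v = 0 → A.grad (s v) = 0 ∧ A.pd (s v) = v := by
  let G := LinearMap.ker A.grad.toAddMonoidHom.toRatLinearMap
  let f : G →ₗ[ℚ] V := A.pd.toAddMonoidHom.toRatLinearMap ∘ₗ G.subtype
  obtain ⟨g, hg⟩ := f.rangeRestrict.exists_rightInverse_of_surjective f.range_rangeRestrict
  obtain ⟨s, hs⟩ := g.exists_extend
  refine ⟨(G.subtype ∘ₗ s).toAddMonoidHom, fun v hv => ⟨(s v).2, ?_⟩⟩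
  obtain ⟨w, hw, hwv⟩ := A.exists_primitive v hv
  let y : f.range := ⟨v, ⟨w, hw⟩, hwv⟩
  calc A.pd (s v) = f (g y) := congr_arg f (LinearMap.congr_fun hs y)
    _ = v := congr_arg Subtype.val (LinearMap.congr_fun hg y)

theorem exists_eval_total_eq [Module ℚ V] {u : Cochain E V k} (hskew : IsSkew u)
    (hu : ∀ e, A.grad (u e) = 0) :
    ∃ b : Cochain X V k, IsSkew b ∧ A.diff b = 0 ∧ A.eval (A.total b) = u := by
  obtain ⟨s, hs⟩ := A.exists_additive_primitive
  have hsu : IsSkew (mapRange.addMonoidHom s u) :=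
    hskew.map (mapRange.addMonoidHom s) fun σ x v => by simp [permute_single]
  refine ⟨A.lift (mapRange.addMonoidHom s u), hsu.transport _,
    diff_lift fun e => (hs _ (hu e)).1, ?_⟩
  rw [eval_total, eval_lift]
  ext e
  simp [(hs _ (hu e)).2]

variable (A)

variable [IsScalarTower C F V]

/-- The elements of `V` killed by all the derivations. -/
noncomputable def constants : Submodule C V :=
  LinearMap.ker (A.grad.restrictScalars C) ⊓ LinearMap.ker A.pd

/-- The arrays which represent cocycles in the quotient of the complex by total derivatives. -/
noncomputable def cocycles (k : ℕ) : Submodule C (Cochain X V k) :=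
  skewCochains C X V k ⊓
    ((skewCochains C X V (k + 1)).map A.total).comap (A.diff.restrictScalars C)

/-- The image of `δ`. -/
noncomputable def exactCochains : (k : ℕ) → Submodule C (Cochain X V k)
  | 0 => ⊥
  | k + 1 => (skewCochains C X V k).map (A.diff.restrictScalars C)

/-- The arrays which represent coboundaries in the quotient of the complex by total derivatives. -/
noncomputable def coboundaries (k : ℕ) : Submodule C (Cochain X V k) :=
  A.exactCochains k ⊔ (skewCochains C X V k).map A.total

/-- The array `Q` such that `δ P = (∂ + λ_0 + ⋯ + λ_k) Q` for a cocycle `P`. -/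
noncomputable def transgression (k : ℕ) : A.cocycles k →ₗ[C] Cochain X V (k + 1) :=
  (LinearEquiv.ofInjective A.total A.total_injective).symm.toLinearMap ∘ₗ
    ((A.diff.restrictScalars C) ∘ₗ (A.cocycles k).subtype).codRestrict (LinearMap.range A.total)
      fun P => LinearMap.map_le_range P.2.2

theorem total_transgression (P : A.cocycles k) :
    A.total (A.transgression k P) = A.diff (P : Cochain X V k) :=
  congr_arg Subtype.val ((LinearEquiv.ofInjective A.total A.total_injective).apply_symm_apply _)

theorem isSkew_transgression (P : A.cocycles k) : IsSkew (A.transgression k P) := by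
  obtain ⟨Q, hQ, hPQ⟩ := P.2.2
  rwa [A.total_injective ((A.total_transgression P).trans hPQ.symm)]

theorem diff_transgression (P : A.cocycles k) : A.diff (A.transgression k P) = 0 :=
  A.total_injective (by rw [total_diff, total_transgression, diff_diff, map_zero])

theorem eval_transgression_mem (P : A.cocycles k) :
    A.eval (A.transgression k P) ∈ skewCochainsIn E A.constants (k + 1) := by
  refine mem_skewCochainsIn.2 ⟨(A.isSkew_transgression P).transport _, fun e =>
    ⟨grad_eval_eq_zero (A.diff_transgression P) e, ?_⟩⟩
  have htotal : A.eval (A.total (A.transgression k P)) e = 0 := by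
    rw [total_transgression, eval_diff, Finsupp.zero_apply]
  rwa [eval_total, mapRange.linearMap_apply, mapRange_apply] at htotal

/-- The map which identifies the cohomology with the skewsymmetric arrays with constant entries. -/
noncomputable def symbol (k : ℕ) : A.cocycles k →ₗ[C] skewCochainsIn E A.constants (k + 1) :=
  (A.eval.restrictScalars C ∘ₗ A.transgression k).codRestrict _ A.eval_transgression_mem

theorem symbol_surjective [IsAddTorsionFree V] : Function.Surjective (A.symbol k) := by
  rintro ⟨u, hu⟩
  obtain ⟨hskew, hconst⟩ := mem_skewCochainsIn.1 hu
  have hclosed : A.diff (A.lift u) = 0 := diff_lift fun e => (hconst e).1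
  have hlift : IsSkew (A.lift u) := hskew.transport _
  obtain ⟨P, hP, hPu⟩ := exists_diff_eq (A := A) (hlift.totalDeriv A.pd A.shift)
    (by rw [← total, ← total_diff, hclosed, map_zero])
    (by
      rw [← total, eval_total, eval_lift]
      ext e
      simpa using (hconst e).2)
  let P' : A.cocycles k := ⟨P, hP, A.lift u, hlift, hPu.symm⟩
  have htrans : A.transgression k P' = A.lift u :=
    A.total_injective ((A.total_transgression P').trans hPu)
  exact ⟨P', Subtype.ext ((congr_arg A.eval htrans).trans (A.eval_lift u))⟩

theorem mem_exactCochains_of_eval_eq_zero [IsAddTorsionFree V] {P : Cochain X V k}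
    (hP : IsSkew P) (hclosed : A.diff P = 0) (heval : A.eval P = 0) : P ∈ A.exactCochains k := by
  cases k with
  | zero => exact eq_zero_of_eval_eq_zero heval
  | succ k => exact exists_diff_eq hP hclosed heval

theorem mem_coboundaries_of_diff_eq_zero [Module ℚ V] {P : Cochain X V k} (hP : IsSkew P)
    (hclosed : A.diff P = 0) : P ∈ A.coboundaries k := by
  have := IsAddTorsionFree.of_module_rat V
  obtain ⟨S, hS, hSclosed, hSP⟩ :=
    exists_eval_total_eq (hP.transport _) (grad_eval_eq_zero hclosed)
  have hexact : P - A.total S ∈ A.exactCochains k :=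
    A.mem_exactCochains_of_eval_eq_zero
      ((skewCochains C X V k).sub_mem hP (hS.totalDeriv A.pd A.shift))
      (by rw [map_sub, hclosed, ← total_diff, hSclosed, map_zero, sub_zero])
      (by rw [map_sub, hSP]; exact sub_self _)
  exact Submodule.mem_sup.2 ⟨_, hexact, _, Submodule.mem_map_of_mem hS, sub_add_cancel _ _⟩

theorem diff_eq_zero_of_mem_exactCochains {P : Cochain X V k} (hP : P ∈ A.exactCochains k) :
    A.diff P = 0 := by
  cases k with
  | zero => rw [(Submodule.mem_bot C).1 hP, map_zero]
  | succ k =>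
    obtain ⟨R, -, rfl⟩ := hP
    exact A.diff_diff R

theorem eval_transgression_eq_zero_of_mem_coboundaries (P : A.cocycles k)
    (hP : (P : Cochain X V k) ∈ A.coboundaries k) : A.eval (A.transgression k P) = 0 := by
  obtain ⟨S, hS, _, ⟨R, -, rfl⟩, hSR⟩ := Submodule.mem_sup.1 hP
  have htrans : A.transgression k P = A.diff R := A.total_injective <| by
    rw [total_transgression, ← hSR, map_add, A.diff_eq_zero_of_mem_exactCochains hS, zero_add,
      total_diff]
  rw [htrans, eval_diff]

theorem mem_coboundaries_of_eval_transgression_eq_zero [Module ℚ V] (P : A.cocycles k)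
    (hP : A.eval (A.transgression k P) = 0) : (P : Cochain X V k) ∈ A.coboundaries k := by
  have := IsAddTorsionFree.of_module_rat V
  obtain ⟨R, hR, hRP⟩ := exists_diff_eq (A.isSkew_transgression P) (A.diff_transgression P) hP
  have hsub : (P : Cochain X V k) - A.total R ∈ A.coboundaries k :=
    A.mem_coboundaries_of_diff_eq_zero
      ((skewCochains C X V k).sub_mem P.2.1 (hR.totalDeriv A.pd A.shift))
      (by rw [map_sub, ← total_transgression, ← hRP, total_diff, sub_self])
  have htotal : A.total R ∈ A.coboundaries k :=
    Submodule.mem_sup_right (Submodule.mem_map_of_mem hR)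
  simpa using add_mem hsub htotal

theorem ker_symbol [Module ℚ V] :
    LinearMap.ker (A.symbol k) = (A.coboundaries k).comap (A.cocycles k).subtype := by
  ext P
  rw [LinearMap.mem_ker, ← Submodule.coe_eq_zero]
  exact ⟨A.mem_coboundaries_of_eval_transgression_eq_zero P,
    A.eval_transgression_eq_zero_of_mem_coboundaries P⟩

theorem rank_cohomology [Module ℚ V] [LinearOrder E] [Finite E] [Nontrivial C]
    (e : A.constants ≃ₗ[C] C) :
    Module.rank C (A.cocycles k ⧸ (A.coboundaries k).comap (A.cocycles k).subtype) =
      ((Nat.card E).choose (k + 1) : Cardinal) := by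
  have := IsAddTorsionFree.of_module_rat V
  have hrank := (LinearMap.quotKerEquivOfSurjective _ (A.symbol_surjective (k := k))).lift_rank_eq
  rwa [ker_symbol, rank_skewCochainsIn e, Cardinal.lift_natCast, Cardinal.lift_eq_nat_iff] at hrank

end AdaptedFrame
end Cohomology

section LinearlyClosed

/-- Solvability in `F` of linear differential equations in one unknown. -/
def IsLinearlyClosed {F : Type*} [Semiring F] (d : F → F) : Prop :=
  ∀ (M : ℕ) (a : ℕ → F), a M ≠ 0 →
    (∀ b, ∃ y, ∑ n ∈ Finset.range (M + 1), a n * d^[n] y = b) ∧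
      (1 ≤ M → ∃ y ≠ 0, ∑ n ∈ Finset.range (M + 1), a n * d^[n] y = 0)

theorem IsLinearlyClosed.surjective {F : Type*} [Semiring F] [Nontrivial F] {d : F → F}
    (h : IsLinearlyClosed d) : d.Surjective :=
  fun b => by
    obtain ⟨y, hy⟩ := (h 1 (fun n => if n = 1 then 1 else 0) (by simp)).1 b
    exact ⟨y, by simpa [Finset.sum_range_succ] using hy⟩

theorem IsLinearlyClosed.isField {F : Type*} [CommRing F] [Nontrivial F] {d : F → F}
    (h : IsLinearlyClosed d) : IsField F where
  exists_pair_ne := exists_pair_ne F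
  mul_comm := mul_comm
  mul_inv_cancel {a} ha := by simpa using (h 0 (fun _ => a) ha).1 1

theorem IsLinearlyClosed.exists_iterate_eq {F : Type*} [Ring F] [Nontrivial F] {d : F → F}
    (h : IsLinearlyClosed d) {r : ℕ} (hr : 1 ≤ r) (c : ℕ → F) :
    ∃ y ≠ 0, d^[r] y = ∑ n ∈ Finset.range r, c n * d^[n] y := by
  obtain ⟨y, hy, hsum⟩ := (h r (fun n => if n = r then 1 else -c n) (by simp)).2 hr
  refine ⟨y, hy, ?_⟩
  rw [Finset.sum_range_succ, if_pos rfl, one_mul, add_comm, add_eq_zero_iff_eq_neg,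
    ← Finset.sum_neg_distrib] at hsum
  rw [hsum]
  refine Finset.sum_congr rfl fun n hn => ?_
  rw [if_neg (Finset.mem_range.1 hn).ne, neg_mul, neg_neg]

end LinearlyClosed

section Connection

variable {C F U : Type*} [CommRing C] [Field F] [Algebra C F] [AddCommGroup U] [Module F U]

/-- An additive endomorphism `∇` of an `F`-vector space satisfying the Leibniz rule. -/
def IsConnection (d : Derivation C F F) (nabla : U →+ U) : Prop :=
  ∀ (f : F) (u : U), nabla (f • u) = d f • u + f • nabla u

/-- A functional which intertwines a connection with the derivation of `F`. -/
def IsHorizontal (d : Derivation C F F) (nabla : U →+ U) (ξ : Module.Dual F U) : Prop :=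
  ∀ u, ξ (nabla u) = d (ξ u)

variable {d : Derivation C F F} {nabla : U →+ U}

theorem IsConnection.isHorizontal_of_basis (h : IsConnection d nabla) {ι : Type*}
    (b : Module.Basis ι F U) {ξ : Module.Dual F U}
    (hξ : ∀ i, ξ (nabla (b i)) = d (ξ (b i))) : IsHorizontal d nabla ξ := by
  intro u
  induction b.mem_span u using Submodule.span_induction with
  | mem _ hu => obtain ⟨i, rfl⟩ := hu; exact hξ i
  | zero => simp
  | add u v _ _ hu hv => simp only [map_add, hu, hv]
  | smul f u _ hu =>
    simp only [h f u, map_add, map_smul, hu, smul_eq_mul, Derivation.leibniz]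
    ring

/-- On a cyclic module a horizontal functional is a nonzero solution of a scalar equation. -/
theorem IsConnection.exists_isHorizontal_of_cyclic (h : IsConnection d nabla)
    (hd : IsLinearlyClosed d) {r : ℕ} (hr : 1 ≤ r) {v : U} (b : Module.Basis (Fin r) F U)
    (hb : ∀ i, b i = nabla^[i] v) : ∃ ξ ≠ 0, IsHorizontal d nabla ξ := by
  let c (n : ℕ) : F := if hn : n < r then b.repr (nabla^[r] v) ⟨n, hn⟩ else 0
  obtain ⟨y, hy, hyr⟩ := hd.exists_iterate_eq hr c
  let ξ : Module.Dual F U := b.constr F fun i => d^[i] y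
  have hξ (i : Fin r) : ξ (nabla^[i] v) = d^[i] y := by rw [← hb, b.constr_basis]
  have hξr : ξ (nabla^[r] v) = d^[r] y := by
    rw [hyr, Finset.sum_range, ← b.sum_repr (nabla^[r] v), map_sum]
    simp [c, hb, hξ]
  refine ⟨ξ, fun h0 => hy ?_, h.isHorizontal_of_basis b fun i => ?_⟩
  · simpa [h0] using (hξ ⟨0, hr⟩).symm
  · rw [hb, hξ, ← Function.iterate_succ_apply' nabla, ← Function.iterate_succ_apply' d]
    rcases (Nat.succ_le_of_lt i.2).lt_or_eq with hi | hi
    · exact hξ ⟨i + 1, hi⟩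
    · rw [Nat.succ_eq_add_one] at hi ⊢
      rw [hi, hξr]

theorem exists_linearIndependent_mem_span [FiniteDimensional F U] (s : ℕ → U) :
    ∃ r, LinearIndependent F (fun i : Fin r => s i) ∧
      s r ∈ Submodule.span F (Set.range fun i : Fin r => s i) := by
  by_contra! hspan
  have hindep (r : ℕ) : LinearIndependent F (fun i : Fin r => s i) := by
    induction r with
    | zero => exact linearIndependent_empty_type
    | succ r ih => exact linearIndependent_finSucc'.2 ⟨ih, hspan r ih⟩
  have hcard := (hindep (Module.finrank F U + 1)).fintype_card_le_finrank
  simp at hcard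

theorem IsConnection.mem_span (h : IsConnection d nabla) {s : Set U}
    (hs : ∀ u ∈ s, nabla u ∈ Submodule.span F s) {u : U} (hu : u ∈ Submodule.span F s) :
    nabla u ∈ Submodule.span F s := by
  induction hu using Submodule.span_induction with
  | mem u hu => exact hs u hu
  | zero => simp
  | add u w _ _ hu hw => rw [map_add]; exact add_mem hu hw
  | smul f u hu hnu =>
    rw [h]
    exact add_mem (Submodule.smul_mem _ _ hu) (Submodule.smul_mem _ _ hnu)

theorem IsConnection.mem_span_iterate (h : IsConnection d nabla) {r : ℕ} {v : U}
    (hr : nabla^[r] v ∈ Submodule.span F (Set.range fun i : Fin r => nabla^[i] v)) {u : U}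
    (hu : u ∈ Submodule.span F (Set.range fun i : Fin r => nabla^[i] v)) :
    nabla u ∈ Submodule.span F (Set.range fun i : Fin r => nabla^[i] v) := by
  refine h.mem_span (Set.forall_mem_range.2 fun i => ?_) hu
  rcases (Nat.succ_le_of_lt i.2).lt_or_eq with hi | hi
  · exact Submodule.subset_span ⟨⟨i + 1, hi⟩, Function.iterate_succ_apply' nabla i v⟩
  · rwa [← Function.iterate_succ_apply' nabla, hi]

theorem IsConnection.exists_quotient (h : IsConnection d nabla) {W : Submodule F U}
    (hW : ∀ u ∈ W, nabla u ∈ W) : ∃ nablaQ : U ⧸ W →+ U ⧸ W, IsConnection d nablaQ ∧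
      ∀ u, nablaQ (W.mkQ u) = W.mkQ (nabla u) := by
  refine ⟨QuotientAddGroup.map W.toAddSubgroup W.toAddSubgroup nabla hW, fun f u => ?_,
    fun _ => rfl⟩
  obtain ⟨u, rfl⟩ := W.mkQ_surjective u
  exact congr_arg W.mkQ (h f u)

/-- Pull a horizontal functional back from the quotient by the cyclic submodule of any vector. -/
theorem IsConnection.exists_isHorizontal [FiniteDimensional F U] [Nontrivial U]
    (h : IsConnection d nabla) (hd : IsLinearlyClosed d) : ∃ ξ ≠ 0, IsHorizontal d nabla ξ := by
  induction hn : Module.finrank F U using Nat.strong_induction_on generalizing U with | _ n ih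
  obtain ⟨v, hv⟩ := exists_ne (0 : U)
  obtain ⟨r, hindep, hspan⟩ := exists_linearIndependent_mem_span (F := F) fun i => nabla^[i] v
  have hr : 1 ≤ r := by
    rw [Nat.one_le_iff_ne_zero]
    rintro rfl
    simp [hv] at hspan
  set W := Submodule.span F (Set.range fun i : Fin r => nabla^[i] v)
  by_cases htop : W = ⊤
  · exact h.exists_isHorizontal_of_cyclic hd hr (v := v) (Module.Basis.mk hindep htop.ge)
      fun i => by simp
  · obtain ⟨nablaQ, hQ, hmk⟩ := h.exists_quotient fun _ => h.mem_span_iterate hspan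
    have : Nontrivial (U ⧸ W) := Submodule.Quotient.nontrivial_iff.2 htop
    have hvW : v ∈ W := Submodule.subset_span ⟨⟨0, hr⟩, rfl⟩
    have hlt : Module.finrank F (U ⧸ W) < n := by
      have := Submodule.one_le_finrank_iff.2 (W.ne_bot_iff.2 ⟨v, hvW, hv⟩)
      have := W.finrank_quotient_add_finrank
      omega
    obtain ⟨ξ, hξ, hξQ⟩ := ih _ hlt hQ rfl
    refine ⟨ξ ∘ₗ W.mkQ, fun h0 => hξ ?_, fun u => ?_⟩
    · exact (LinearMap.cancel_right W.mkQ_surjective).1 (h0.trans (LinearMap.zero_comp _).symm)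
    · exact (congr_arg ξ (hmk u)).symm.trans (hξQ _)

/-- A horizontal functional on the kernel of a horizontal functional `ξ` extends to the whole
space: choosing its value `g` at a vector `u₀` with `ξ u₀ = 1` amounts to solving `d g = f`. -/
theorem IsHorizontal.exists_extend (h : IsConnection d nabla) (hd : Function.Surjective d)
    {ξ : Module.Dual F U} (hξ : IsHorizontal d nabla ξ) {u₀ : U} (hu₀ : ξ u₀ = 1)
    {nablaK : LinearMap.ker ξ →+ LinearMap.ker ξ} (hK : ∀ u, (nablaK u : U) = nabla u)
    {η : Module.Dual F (LinearMap.ker ξ)} (hη : IsHorizontal d nablaK η) :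
    ∃ η' : Module.Dual F U, IsHorizontal d nabla η' ∧ ∀ u : LinearMap.ker ξ, η' u = η u := by
  let p : U →ₗ[F] LinearMap.ker ξ := (LinearMap.id - ξ.smulRight u₀).codRestrict _ fun u => by
    simp [hu₀]
  have hpu (u : U) : (p u : U) = u - ξ u • u₀ := rfl
  let k₀ : LinearMap.ker ξ := ⟨nabla u₀, by simp [hξ u₀, hu₀]⟩
  have hp (u : U) : p (nabla u) = nablaK (p u) + ξ u • k₀ := by
    ext
    simp only [Submodule.coe_add, Submodule.coe_smul, hK, hpu, map_sub, h (ξ u) u₀, hξ u, k₀]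
    abel
  obtain ⟨g, hg⟩ := hd (η k₀)
  refine ⟨η ∘ₗ p + g • ξ, fun u => ?_, fun u => ?_⟩
  · simp only [LinearMap.add_apply, LinearMap.comp_apply, LinearMap.smul_apply, hp, map_add,
      map_smul, hη (p u), hξ u, smul_eq_mul, Derivation.leibniz, hg]
    ring
  · have hu : p u = u := by ext; simp [hpu]
    simp [hu]

theorem IsConnection.exists_basis_isHorizontal [FiniteDimensional F U]
    (h : IsConnection d nabla) (hd : IsLinearlyClosed d) {n : ℕ} (hn : Module.finrank F U = n) :
    ∃ b : Module.Basis (Fin n) F U, ∀ i, IsHorizontal d nabla (b.coord i) := by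
  induction n generalizing U with
  | zero =>
    have := Module.finrank_zero_iff.1 hn
    exact ⟨Module.Basis.empty U, finZeroElim⟩
  | succ n ih =>
    have : Nontrivial U := Module.nontrivial_of_finrank_pos (R := F) (by omega)
    obtain ⟨ξ, hξ0, hξ⟩ := h.exists_isHorizontal hd
    obtain ⟨u₀, hu₀⟩ := LinearMap.surjective hξ0 1
    let nablaK : LinearMap.ker ξ →+ LinearMap.ker ξ :=
      (nabla.comp (LinearMap.ker ξ).subtype.toAddMonoidHom).codRestrict _ fun u => by
        change ξ (nabla u) = 0
        rw [hξ, u.2, map_zero]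
    have hK : IsConnection d nablaK := fun f u => Subtype.ext (h f u)
    obtain ⟨b, hb⟩ := ih hK (by
      have := Module.Dual.finrank_ker_add_one_of_ne_zero hξ0
      omega)
    choose η hη hηb using fun i => hξ.exists_extend h hd.surjective hu₀ (fun _ => rfl) (hb i)
    let φ : U →ₗ[F] (Fin (n + 1) → F) := LinearMap.pi (Fin.cons ξ η)
    have hφ : Function.Injective φ := by
      refine (injective_iff_map_eq_zero φ).2 fun u hu => ?_
      have hξu : ξ u = 0 := congr_fun hu 0
      have hbu : b.repr ⟨u, hξu⟩ = 0 := by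
        ext i
        exact (hηb i ⟨u, hξu⟩).symm.trans (congr_fun hu i.succ)
      exact congr_arg Subtype.val (b.repr.map_eq_zero_iff.1 hbu)
    refine ⟨.ofEquivFun (φ.linearEquivOfInjective hφ (by simp [hn])), fun i u => ?_⟩
    change φ (nabla u) i = d (φ u i)
    cases i using Fin.cases with
    | zero => exact hξ u
    | succ i => exact hη i u

/-- The classes of the second half of a basis modulo the span of its first half. -/
noncomputable def basisQuotient {J E : Type*} (b : Module.Basis (J ⊕ E) F U) :
    Module.Basis E F (U ⧸ Submodule.span F (Set.range (b ∘ Sum.inl))) :=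
  let π : U →ₗ[F] (E →₀ F) := lcomapDomain Sum.inr Sum.inr_injective ∘ₗ b.repr.toLinearMap
  have hπ : Submodule.span F (Set.range (b ∘ Sum.inl)) = LinearMap.ker π := by
    ext u
    rw [Set.range_comp, b.mem_span_image, LinearMap.mem_ker, DFunLike.ext_iff]
    refine ⟨fun h e => ?_, fun h x hx => ?_⟩
    · by_contra he
      simpa using h (Finsupp.mem_support_iff.2 he)
    · cases x with
      | inl j => exact ⟨j, rfl⟩
      | inr e => exact (Finsupp.mem_support_iff.1 hx (h e)).elim
  have hsurj : Function.Surjective π := fun f =>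
    ⟨b.repr.symm (mapDomain Sum.inr f), by
      ext e
      change b.repr (b.repr.symm _) (Sum.inr e) = f e
      rw [LinearEquiv.apply_symm_apply, mapDomain_apply Sum.inr_injective]⟩
  .ofRepr ((Submodule.quotEquivOfEq _ _ hπ).trans (π.quotKerEquivOfSurjective hsurj))

/-- Change the last vectors of a basis so that their classes, modulo the stable subspace spanned
by the others, have horizontal coordinates for the induced connection. -/
theorem IsConnection.exists_basis_isHorizontal_coord (h : IsConnection d nabla)
    (hd : IsLinearlyClosed d) {J : Type*} {n : ℕ} (b : Module.Basis (J ⊕ Fin n) F U)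
    (hb : ∀ j, nabla (b (.inl j)) ∈ Submodule.span F (Set.range (b ∘ Sum.inl))) :
    ∃ b' : Module.Basis (J ⊕ Fin n) F U, (∀ j, b' (.inl j) = b (.inl j)) ∧
      ∀ e, IsHorizontal d nabla (b'.coord (.inr e)) := by
  let W := Submodule.span F (Set.range (b ∘ Sum.inl))
  obtain ⟨nablaQ, hQ, hmk⟩ := h.exists_quotient (W := W) fun _ =>
    h.mem_span (Set.forall_mem_range.2 hb)
  have : FiniteDimensional F (U ⧸ W) := .of_basis (basisQuotient b)
  obtain ⟨bQ, hbQ⟩ := hQ.exists_basis_isHorizontal hd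
    (Module.finrank_eq_card_basis (basisQuotient b) |>.trans (Fintype.card_fin n))
  let bW := Module.Basis.span (b.linearIndependent.comp _ Sum.inl_injective)
  refine ⟨bW.sumQuot bQ, fun j => ?_, fun e u => ?_⟩
  · rw [bW.sumQuot_inl, Module.Basis.span_apply]
    rfl
  · have hu := hbQ e (W.mkQ u)
    rw [hmk] at hu
    simpa only [Module.Basis.coord_apply, Module.Basis.sumQuot_repr_inr] using hu

end Connection

section LeadingMatrix

variable {F ι : Type*} [Field F] {b : ℕ × ι → (ℕ × ι →₀ F)}

theorem linearCombination_mem_degree_le (hb : ∀ x y, x.1 < y.1 → b x y = 0) {m : ℕ}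
    {c : ℕ × ι →₀ F} (hc : c ∈ supported F F {x | x.1 ≤ m}) :
    linearCombination F b c ∈ supported F F {x | x.1 ≤ m} := by
  refine Submodule.sum_mem _ fun x hx => Submodule.smul_mem _ _ ?_
  refine (mem_supported' F _).2 fun y hy => hb x y ?_
  have : x.1 ≤ m := hc hx
  simp only [Set.mem_ofPred_eq, not_le] at hy
  omega

variable [Fintype ι]

theorem linearCombination_apply_of_degree_le (hb : ∀ x y, x.1 < y.1 → b x y = 0) {m : ℕ}
    {c : ℕ × ι →₀ F} (hc : ∀ x, m < x.1 → c x = 0) (i : ι) :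
    linearCombination F b c (m, i) = ∑ j, c (m, j) * b (m, j) (m, i) := by
  classical
  have hsum : linearCombination F b c (m, i) =
      ∑ x ∈ Finset.univ.image (Prod.mk m), c x * b x (m, i) := by
    rw [linearCombination_apply, Finsupp.sum_apply]
    simp only [Finsupp.smul_apply, smul_eq_mul, Finsupp.sum]
    refine Finset.sum_congr_of_eq_on_inter ?_ ?_ fun _ _ _ => rfl
    · intro x _ hxm
      rcases lt_trichotomy x.1 m with h | rfl | h
      · rw [hb x _ h, mul_zero]
      · simp at hxm
      · rw [hc x h, zero_mul]
    · intro x _ hx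
      rw [notMem_support_iff.1 hx, zero_mul]
  rw [hsum, Finset.sum_image (Prod.mk_right_injective m).injOn]

variable [DecidableEq ι]

theorem linearCombination_injective_of_isUnit_leading (hb : ∀ x y, x.1 < y.1 → b x y = 0)
    (hlead : ∀ m, IsUnit (Matrix.of fun j i => b (m, j) (m, i))) :
    Function.Injective (linearCombination F b) := by
  refine (injective_iff_map_eq_zero _).2 fun c hc => ?_
  by_contra hne
  obtain ⟨⟨m, j⟩, hx, hmax⟩ := c.support.exists_max_image Prod.fst (support_nonempty_iff.2 hne)
  have htop (x : ℕ × ι) (hx : m < x.1) : c x = 0 := by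
    by_contra hcx
    exact hx.not_ge (hmax x (mem_support_iff.2 hcx))
  have hzero : (fun j => c (m, j)) = 0 :=
    Matrix.vecMul_injective_iff_isUnit.2 (hlead m) <| by
      ext i
      simp [Matrix.vecMul, dotProduct, ← linearCombination_apply_of_degree_le hb htop, hc]
  exact mem_support_iff.1 hx (congr_fun hzero j)

/-- On the finite-dimensional space of vectors of degree `≤ m` injectivity implies surjectivity. -/
theorem exists_basis_of_isUnit_leading (hb : ∀ x y, x.1 < y.1 → b x y = 0)
    (hlead : ∀ m, IsUnit (Matrix.of fun j i => b (m, j) (m, i))) :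
    ∃ B : Module.Basis (ℕ × ι) F (ℕ × ι →₀ F), ⇑B = b := by
  have hinj := linearCombination_injective_of_isUnit_leading hb hlead
  have hsurj : Function.Surjective (linearCombination F b) := fun c => by
    obtain ⟨m, hm⟩ := (c.support.image Prod.fst).bddAbove
    let S : Submodule F (ℕ × ι →₀ F) := supported F F {x | x.1 ≤ m}
    have hcS : c ∈ S := fun x hx => hm (by simpa using ⟨x.2, by simpa using hx⟩)
    have hfin : {x : ℕ × ι | x.1 ≤ m}.Finite :=
      ((Set.finite_Iic m).prod Set.finite_univ).subset fun x hx => ⟨hx, trivial⟩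
    have := hfin.to_subtype
    have : FiniteDimensional F S := .equiv (supportedEquivFinsupp _).symm
    obtain ⟨⟨c', _⟩, hc'⟩ := LinearMap.surjective_of_injective
      (f := (linearCombination F b).restrict fun _ => linearCombination_mem_degree_le hb (m := m))
      (fun x y h => Subtype.ext (hinj (congr_arg Subtype.val h))) ⟨c, hcS⟩
    exact ⟨c', congr_arg Subtype.val hc'⟩
  exact ⟨.mk hinj (by rw [← range_linearCombination, LinearMap.range_eq_top.2 hsurj]),
    Module.Basis.coe_mk _ _⟩

end LeadingMatrix

section Prolongation

variable {C F ι : Type*} [CommRing C] [Field F] [Algebra C F] (d : Derivation C F F)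

/-- The index of `∂u_i^{(n)} = u_i^{(n+1)}`, if `(n, i)` is the index of `u_i^{(n)}`. -/
def shiftIndex (x : ℕ × ι) : ℕ × ι := (x.1 + 1, x.2)

theorem shiftIndex_injective : Function.Injective (shiftIndex : ℕ × ι → ℕ × ι) := by
  rintro ⟨n, i⟩ ⟨m, j⟩ h
  simpa [shiftIndex] using h

/-- The operator `∂ + λ` on `F[λ]^ι`, whose basis vector `λ^n e_i` has index `(n, i)`. -/
noncomputable def prolong : (ℕ × ι →₀ F) →ₗ[C] (ℕ × ι →₀ F) :=
  totalDeriv₁ d.toLinearMap shiftIndex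

theorem prolong_single_one (x : ℕ × ι) : prolong d (single x 1) = single (shiftIndex x) 1 := by
  simp [prolong, totalDeriv₁, mapDomain_single]

theorem prolong_apply_succ (u : ℕ × ι →₀ F) (n : ℕ) (i : ι) :
    prolong d u (n + 1, i) = d (u (n + 1, i)) + u (n, i) :=
  congr_arg _ (mapDomain_apply shiftIndex_injective u (n, i))

theorem isConnection_prolong :
    IsConnection d (prolong d : (ℕ × ι →₀ F) →ₗ[C] _).toAddMonoidHom := by
  intro f u
  induction u using Finsupp.induction_linear with
  | zero => simp
  | add s t hs ht =>
    simp only [smul_add, map_add, hs, ht]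
    abel
  | single x a =>
    simp [prolong, totalDeriv₁, mapDomain_single, -single_mul, mul_comm]
    abel

/-- The `j`-th row `∑_m K_{ji,m} λ^m` of the operator `K`. -/
noncomputable def operatorRow [Fintype ι] (N : ℕ) (K : ι → ι → ℕ → F) (j : ι) : ℕ × ι →₀ F :=
  ∑ m ∈ Finset.range (N + 1), ∑ i, single (m, i) (K j i m)

theorem operatorRow_apply [Fintype ι] (N : ℕ) (K : ι → ι → ℕ → F) (j : ι) (x : ℕ × ι) :
    operatorRow N K j x = if x.1 ≤ N then K j x.2 x.1 else 0 := by
  classical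
  obtain ⟨m, i⟩ := x
  simp only [operatorRow, Finsupp.finsetSum_apply, single_apply, Prod.mk.injEq, ite_and]
  simp

theorem iterate_prolong_apply_of_lt {u : ℕ × ι →₀ F} {m : ℕ} (hu : ∀ x, m < x.1 → u x = 0) (n : ℕ)
    {x : ℕ × ι} (hx : m + n < x.1) : (prolong d)^[n] u x = 0 := by
  induction n generalizing x with
  | zero => exact hu x hx
  | succ n ih =>
    obtain ⟨r | r, i⟩ := x
    · simp at hx
    · rw [Function.iterate_succ_apply', prolong_apply_succ, ih (by lia), ih (by lia), map_zero,
        add_zero]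

theorem iterate_prolong_apply_leading {u : ℕ × ι →₀ F} {m : ℕ} (hu : ∀ x, m < x.1 → u x = 0)
    (n : ℕ) (i : ι) : (prolong d)^[n] u (m + n, i) = u (m, i) := by
  induction n with
  | zero => rfl
  | succ n ih =>
    rw [← add_assoc, Function.iterate_succ_apply', prolong_apply_succ, ih,
      iterate_prolong_apply_of_lt d hu n (by lia), map_zero, zero_add]

theorem exists_basis_prolong [Fintype ι] [DecidableEq ι] (N : ℕ) (K : ι → ι → ℕ → F)
    (hK : IsUnit (Matrix.of fun i j => K i j N)) :
    ∃ b : Module.Basis (ℕ × ι) F (ℕ × ι →₀ F),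
      ∀ n i, b (N + n, i) = (prolong d)^[n] (operatorRow N K i) := by
  let w (x : ℕ × ι) : ℕ × ι →₀ F :=
    if x.1 < N then single x 1 else (prolong d)^[x.1 - N] (operatorRow N K x.2)
  have hrow (j : ι) (x : ℕ × ι) (hx : N < x.1) : operatorRow N K j x = 0 := by
    rw [operatorRow_apply, if_neg hx.not_ge]
  have hdegree (x y : ℕ × ι) (hxy : x.1 < y.1) : w x y = 0 := by
    simp only [w]
    split_ifs with hx
    · exact single_eq_of_ne (by rintro rfl; exact hxy.false)
    · exact iterate_prolong_apply_of_lt d (hrow _) _ (by lia)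
  have hlead (m : ℕ) : IsUnit (Matrix.of fun j i => w (m, j) (m, i)) := by
    by_cases hm : m < N
    · convert isUnit_one
      ext j i
      simp [w, hm, single_apply, Matrix.one_apply]
    · convert hK
      obtain ⟨n, rfl⟩ := Nat.exists_eq_add_of_le (not_lt.1 hm)
      simp [w, iterate_prolong_apply_leading d (hrow _), operatorRow_apply]
  obtain ⟨b, hb⟩ := exists_basis_of_isUnit_leading hdegree hlead
  exact ⟨b, fun n i => by simp [hb, w]⟩

/-- The enumeration `(n, i) ↦ n l + i` puts the variables `u_i^{(n)}` in lexicographic order. The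
first `N l` of them are split off. -/
theorem exists_basis_prolong_isHorizontal {l : ℕ} [NeZero l] (hd : IsLinearlyClosed d) (N : ℕ)
    (K : Fin l → Fin l → ℕ → F) (hK : IsUnit (Matrix.of fun i j => K i j N)) :
    ∃ b : Module.Basis (ℕ ⊕ Fin (N * l)) F (ℕ × Fin l →₀ F),
      (∀ n i, b (.inl ((Nat.divModEquiv l).symm (n, i))) =
        (prolong d)^[n] (operatorRow N K i)) ∧
      ∀ x e, b.repr (single (shiftIndex x) 1) (.inr e) = d (b.repr (single x 1) (.inr e)) := by
  obtain ⟨b, hb⟩ := exists_basis_prolong d N K hK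
  let split : ℕ × Fin l ≃ ℕ ⊕ Fin (N * l) :=
    (Nat.divModEquiv l).symm.trans ((finSumNatEquiv (N * l)).symm.trans (sumComm _ _))
  have hsplit (n : ℕ) (i : Fin l) :
      split.symm (.inl ((Nat.divModEquiv l).symm (n, i))) = (N + n, i) := by
    rw [Equiv.symm_apply_eq]
    simp [split, add_mul, add_assoc]
  have hinl (n : ℕ) (i : Fin l) : b.reindex split (.inl ((Nat.divModEquiv l).symm (n, i))) =
      (prolong d)^[n] (operatorRow N K i) := by
    rw [Module.Basis.reindex_apply, hsplit, hb]
  obtain ⟨b', hb', hcoord⟩ := (isConnection_prolong d).exists_basis_isHorizontal_coord hd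
    (b.reindex split) fun t => by
      obtain ⟨⟨n, i⟩, rfl⟩ := (Nat.divModEquiv l).symm.surjective t
      refine Submodule.subset_span ⟨(Nat.divModEquiv l).symm (n + 1, i), ?_⟩
      rw [Function.comp_apply, hinl, hinl, Function.iterate_succ_apply']
      rfl
  refine ⟨b', fun n i => by rw [hb', hinl], fun x e => ?_⟩
  rw [← prolong_single_one d]
  exact hcoord e (single x 1)

end Prolongation

section Coefficients

variable {ι V : Type*} [CommRing V] {k : ℕ}

/-- The exponent of the monomial `λ_1^{n_1} ⋯ λ_k^{n_k}` with index
`((n_1, i_1), …, (n_k, i_k))`. -/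
noncomputable def exponent (x : Fin k → ℕ × ι) : Fin k →₀ ℕ :=
  equivFunOnFinite.symm fun a => (x a).1

@[simp]
theorem exponent_apply (x : Fin k → ℕ × ι) (a : Fin k) : exponent x a = (x a).1 :=
  rfl

theorem mapDomain_exponent (σ : Perm (Fin k)) (x : Fin k → ℕ × ι) :
    mapDomain σ (exponent (x ∘ σ)) = exponent x := by
  ext a
  obtain ⟨b, rfl⟩ := σ.surjective a
  rw [mapDomain_apply σ.injective]
  rfl

theorem exponent_update_shiftIndex (x : Fin k → ℕ × ι) (a : Fin k) :
    exponent (Function.update x a (shiftIndex (x a))) = single a 1 + exponent x := by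
  ext b
  by_cases hb : b = a
  · subst hb
    simp [shiftIndex, add_comm]
  · simp [hb]

/-- Splitting the index of a coefficient into the component and the exponent. -/
noncomputable def splitIndex (ι : Type*) (k : ℕ) :
    (Fin k → ℕ × ι) ≃ (Fin k → ι) × (Fin k →₀ ℕ) where
  toFun x := (fun a => (x a).2, exponent x)
  invFun p a := (p.2 a, p.1 a)
  left_inv _ := rfl
  right_inv _ := Prod.ext rfl (Finsupp.ext fun _ => rfl)

/-- The array of the coefficients of an array of polynomials. -/
noncomputable def coeffArray (R : Type*) [Semiring R] [Module R V] [Finite ι] :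
    ((Fin k → ι) → MvPolynomial (Fin k) V) ≃ₗ[R] Cochain (ℕ × ι) V k :=
  (LinearEquiv.piCongrRight fun _ => AddMonoidAlgebra.coeffLinearEquiv R) ≪≫ₗ
    (linearEquivFunOnFinite R _ _).symm ≪≫ₗ (curryLinearEquiv R).symm ≪≫ₗ
    Finsupp.domLCongr (splitIndex ι k).symm

variable {R : Type*} [Semiring R] [Module R V] [Finite ι]

theorem coeffArray_apply (P : (Fin k → ι) → MvPolynomial (Fin k) V) (x : Fin k → ℕ × ι) :
    coeffArray R P x = (P fun a => (x a).2).coeff (exponent x) :=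
  rfl

theorem coeff_coeffMap {f : V → V} (hf : f 0 = 0) (Q : MvPolynomial (Fin k) V) (m : Fin k →₀ ℕ) :
    (coeffMap f Q).coeff m = f (Q.coeff m) := by
  classical
  simp only [coeffMap, MvPolynomial.coeff_sum, MvPolynomial.coeff_monomial, Finset.sum_ite_eq']
  split_ifs with h
  · rfl
  · rw [MvPolynomial.notMem_support_iff.1 h, hf]

theorem isSkew_coeffArray {l : ℕ} {P : (Fin k → Fin l) → MvPolynomial (Fin k) V} :
    IsSkew (coeffArray R P) ↔ OmegaSkew P := by
  have hrename (σ : Perm (Fin k)) (x : Fin k → ℕ × Fin l) :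
      (MvPolynomial.rename σ (P fun a => (x (σ a)).2)).coeff (exponent x) =
        coeffArray R P (x ∘ σ) := by
    rw [← mapDomain_exponent σ x, MvPolynomial.coeff_rename_mapDomain _ σ.injective]
    rfl
  rw [isSkew_iff_apply_comp]
  refine ⟨fun h σ i => ?_, fun h σ x => ?_⟩
  · ext m
    obtain ⟨x, hx⟩ := (splitIndex (Fin l) k).surjective (i, m)
    obtain ⟨rfl, rfl⟩ := Prod.mk.inj hx
    rw [hrename, h, MvPolynomial.coeff_smul]
    rfl
  · rw [← hrename, h σ fun a => (x a).2, MvPolynomial.coeff_smul]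
    rfl

theorem coeff_X_mul_exponent (P : (Fin k → ι) → MvPolynomial (Fin k) V) (a : Fin k)
    (x : Fin k → ℕ × ι) :
    (MvPolynomial.X a * P fun b => (x b).2).coeff (exponent x) =
      mapDomain (fun x => Function.update x a (shiftIndex (x a))) (coeffArray R P) x := by
  by_cases hx : x ∈ Set.range fun x : Fin k → ℕ × ι => Function.update x a (shiftIndex (x a))
  · obtain ⟨y, rfl⟩ := hx
    have hcomponent (b : Fin k) : (Function.update y a (shiftIndex (y a)) b).2 = (y b).2 := by
      by_cases hb : b = a
      · subst hb
        simp [shiftIndex]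
      · simp [hb]
    rw [mapDomain_apply (update_shift_injective shiftIndex_injective a), coeffArray_apply]
    simp only [exponent_update_shiftIndex, hcomponent, MvPolynomial.coeff_X_mul]
  · have hxa : (x a).1 = 0 := by
      by_contra hne
      obtain ⟨n, hn⟩ := Nat.exists_eq_succ_of_ne_zero hne
      have hshift : shiftIndex (n, (x a).2) = x a := Prod.ext hn.symm rfl
      exact hx ⟨Function.update x a (n, (x a).2), by simp [hshift]⟩
    rw [mapDomain_of_notMem_range _ _ hx, MvPolynomial.coeff_X_mul', if_neg (by simp [hxa])]

end Coefficients

theorem coeffArray_bigD {C V : Type*} [CommRing C] [CommRing V] [Module C V] {k l : ℕ}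
    (pd : V →ₗ[C] V) (P : (Fin k → Fin l) → MvPolynomial (Fin k) V) :
    coeffArray C (bigD pd P) = totalDeriv pd shiftIndex (coeffArray C P) := by
  ext x
  simp only [coeffArray_apply, bigD, Finset.sum_mul, MvPolynomial.coeff_add,
    MvPolynomial.coeff_sum, coeff_coeffMap (map_zero pd), coeff_X_mul_exponent (R := C)]
  simp [totalDeriv, add_comm, coeffArray_apply]

section Binomial

variable {C V X : Type*} [CommRing C] [AddCommGroup V] [Module C V]

theorem iterate_totalDeriv₁_single (pd : V →ₗ[C] V) (shift : X → X) (n : ℕ) (x : X) (v : V) :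
    (totalDeriv₁ pd shift)^[n] (single x v) =
      ∑ p ∈ Finset.range (n + 1), single (shift^[n - p] x) (n.choose p • pd^[p] v) := by
  let A : Module.End C (X →₀ V) := mapRange.linearMap pd
  let B : Module.End C (X →₀ V) := lmapDomain V C shift
  have hAB : Commute A B := by
    ext y w : 2
    simp [A, B, mapDomain_single]
  have hA (p : ℕ) (y : X) (w : V) : (A ^ p) (single y w) = single y (pd^[p] w) := by
    induction p with
    | zero => rfl
    | succ p ih => simp [pow_succ', Function.iterate_succ_apply', ih, A]
  have hB (r : ℕ) (y : X) (w : V) : (B ^ r) (single y w) = single (shift^[r] y) w := by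
    induction r with
    | zero => rfl
    | succ r ih => simp [pow_succ', Function.iterate_succ_apply', ih, B, mapDomain_single]
  change (⇑(A + B))^[n] (single x v) = _
  rw [← Module.End.pow_apply, hAB.add_pow, LinearMap.sum_apply]
  refine Finset.sum_congr rfl fun p _ => ?_
  rw [← nsmul_eq_mul', LinearMap.smul_apply, Module.End.mul_apply, hB, hA, smul_single]

end Binomial

section Differential

variable {C F V : Type*} [CommRing C] [Field F] [Algebra C F] [CommRing V] [Algebra F V] {k l : ℕ}

theorem iterate_shiftIndex {ι : Type*} (r : ℕ) (x : ℕ × ι) :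
    shiftIndex^[r] x = (r + x.1, x.2) := by
  induction r with
  | zero => simp
  | succ r ih => simp [Function.iterate_succ_apply', ih, shiftIndex, add_right_comm]

theorem iterate_prolong_operatorRow (d : Derivation C F F) (N : ℕ) (K : Fin l → Fin l → ℕ → F)
    (n : ℕ) (j : Fin l) (x : ℕ × Fin l) :
    (prolong d)^[n] (operatorRow N K j) x = ∑ m ∈ Finset.range (N + 1),
      ∑ p ∈ Finset.range (n + 1),
        if n - p + m = x.1 then n.choose p * d^[p] (K j x.2 m) else 0 := by
  have hrow : (prolong d)^[n] (operatorRow N K j) = ∑ m ∈ Finset.range (N + 1), ∑ i,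
      ∑ p ∈ Finset.range (n + 1), single (n - p + m, i) (n.choose p • d^[p] (K j i m)) := by
    simp only [operatorRow, prolong, ← Module.End.pow_apply, map_sum]
    simp only [Module.End.pow_apply, iterate_totalDeriv₁_single, iterate_shiftIndex]
    rfl
  obtain ⟨q, i⟩ := x
  simp only [hrow, finsetSum_apply, single_apply, Prod.mk.injEq, nsmul_eq_mul]
  refine Finset.sum_congr rfl fun m _ => ?_
  rw [Finset.sum_eq_single i (fun i' _ hi' => by simp [hi']) (by simp)]
  simp

theorem exponent_sub_single (x : Fin (k + 1) → ℕ × Fin l) (α : Fin (k + 1)) :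
    exponent x - single α (x α).1 = mapDomain α.succAbove (exponent (α.removeNth x)) := by
  ext b
  obtain rfl | ⟨b, rfl⟩ := Fin.eq_self_or_eq_succAbove α b
  · simp [mapDomain_of_notMem_range]
  · simp [mapDomain_apply Fin.succAbove_right_injective, Fin.removeNth]

theorem coeff_coeffMap_mul_monomial {f : V → V} (hf : f 0 = 0) (Q : MvPolynomial (Fin k) V)
    (x : Fin (k + 1) → ℕ × Fin l) (α : Fin (k + 1)) (q : ℕ) (v : V) :
    (coeffMap f (MvPolynomial.rename α.succAbove Q) *
        MvPolynomial.monomial (single α q) v).coeff (exponent x) =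
      if q = (x α).1 then f (Q.coeff (exponent (α.removeNth x))) * v else 0 := by
  rw [MvPolynomial.coeff_mul_monomial']
  split_ifs with hle hq hq
  · rw [coeff_coeffMap hf, hq, exponent_sub_single,
      MvPolynomial.coeff_rename_mapDomain _ Fin.succAbove_right_injective]
  · rw [coeff_coeffMap hf, MvPolynomial.coeff_rename_eq_zero, hf, zero_mul]
    intro u hu
    have hα := DFunLike.congr_fun hu α
    rw [mapDomain_of_notMem_range _ _ (by simp)] at hα
    simp only [single_le_iff, exponent_apply, tsub_apply, single_eq_same] at hle hα
    lia
  · exact absurd hq.le (by simpa using hle)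
  · rfl

theorem coeff_coeffMap_mul_kFactor {d : Derivation C F F} {pd : V → V}
    (hd : ∀ f, algebraMap F V (d f) = pd (algebraMap F V f)) {f : V → V} (hf : f 0 = 0)
    (Q : MvPolynomial (Fin k) V) (N : ℕ) (K : Fin l → Fin l → ℕ → F) (n : ℕ) (j : Fin l)
    (x : Fin (k + 1) → ℕ × Fin l) (α : Fin (k + 1)) :
    (coeffMap f (MvPolynomial.rename α.succAbove Q) *
        kFactor pd N (fun i j m => algebraMap F V (K i j m)) n j (x α).2 α).coeff (exponent x) =
      (prolong d)^[n] (operatorRow N K j) (x α) • f (Q.coeff (exponent (α.removeNth x))) := by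
  have hiterate (p : ℕ) (a : F) : pd^[p] (algebraMap F V a) = algebraMap F V (d^[p] a) :=
    (Function.Semiconj.iterate_right hd p a).symm
  simp only [kFactor, Finset.mul_sum, MvPolynomial.coeff_sum, coeff_coeffMap_mul_monomial hf,
    iterate_prolong_operatorRow, Finset.sum_smul, ite_smul, zero_smul, hiterate]
  simp only [Algebra.smul_def, map_mul, map_natCast, mul_comm (f _)]

end Differential

section TensorId

variable {C F V J X : Type*} [CommRing C] [Field F] [Algebra C F] [AddCommGroup V] [Module F V]

theorem tensorId_single (φ : (J →₀ F) →ₗ[F] (X →₀ F)) (j : J) (v : V) :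
    tensorId V φ (single j v) = outer (φ (single j 1)) v := by
  simp [tensorId]

theorem tensorId_apply (φ : (J →₀ F) →ₗ[F] (X →₀ F)) (c : J →₀ V) (x : X) :
    tensorId V φ c x = c.sum fun j v => φ (single j 1) x • v := by
  simp [tensorId, Finsupp.sum_apply]

variable [Module C V] {d : Derivation C F F} {pd : V →ₗ[C] V}

theorem totalDeriv₁_outer (hpd : ∀ (f : F) v, pd (f • v) = d f • v + f • pd v) (shift : X → X)
    (w : X →₀ F) (v : V) : totalDeriv₁ pd shift (outer w v) =
      outer w (pd v) + outer (totalDeriv₁ d.toLinearMap shift w) v := by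
  induction w using Finsupp.induction_linear with
  | zero => simp
  | add s t hs ht =>
    simp only [map_add, LinearMap.add_apply, hs, ht]
    abel
  | single x f =>
    have houter (y : X) (g : F) (u : V) : outer (single y g) u = single y (g • u) := by
      simp [outer]
    simp [totalDeriv₁, houter, hpd, mapDomain_single]
    abel

theorem tensorId_totalDeriv₁ (hpd : ∀ (f : F) v, pd (f • v) = d f • v + f • pd v)
    {φ : (J →₀ F) →ₗ[F] (X →₀ F)} {shiftJ : J → J} {shift : X → X}
    (hφ : ∀ j, φ (single (shiftJ j) 1) = totalDeriv₁ d.toLinearMap shift (φ (single j 1)))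
    (c : J →₀ V) :
    tensorId V φ (totalDeriv₁ pd shiftJ c) = totalDeriv₁ pd shift (tensorId V φ c) := by
  induction c using Finsupp.induction_linear with
  | zero => simp
  | add s t hs ht => simp only [map_add, hs, ht]
  | single j v =>
    rw [tensorId_single, totalDeriv₁_outer hpd, ← hφ, ← tensorId_single, ← tensorId_single,
      ← map_add]
    simp [totalDeriv₁, mapDomain_single]

end TensorId

section Gradient

variable {F V : Type*} [Field F] [CommRing V] [Algebra F V] {k l : ℕ} {pd : V → V}
  {D : Fin l → ℕ → Derivation F V V} (hV : IsAlgDiffFun pd fun j n => D j n)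

include hV in
theorem finite_partialDeriv_ne_zero (v : V) : {x : ℕ × Fin l | D x.2 x.1 v ≠ 0}.Finite :=
  (hV.d_fin v).preimage (f := Prod.swap) Prod.swap_injective.injOn

/-- The array of the partial derivatives `∂v/∂u_i^{(n)}`. -/
noncomputable def gradient : V →ₗ[F] (ℕ × Fin l →₀ V) where
  toFun v := .ofSupportFinite (fun x => D x.2 x.1 v) (finite_partialDeriv_ne_zero hV v)
  map_add' _ _ := Finsupp.ext fun x => map_add (D x.2 x.1) _ _
  map_smul' _ _ := Finsupp.ext fun x => (D x.2 x.1).map_smul _ _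

theorem gradient_apply (v : V) (x : ℕ × Fin l) : gradient hV v x = D x.2 x.1 v :=
  rfl

theorem gradient_total {C : Type*} [CommRing C] [Algebra C V] {pd : Derivation C V V}
    (hV : IsAlgDiffFun pd fun j n => D j n) (v : V) :
    gradient hV (pd v) = totalDeriv₁ pd.toLinearMap shiftIndex (gradient hV v) := by
  ext ⟨n, j⟩
  cases n with
  | zero =>
    simpa [totalDeriv₁, gradient_apply, mapDomain_of_notMem_range, shiftIndex]
      using hV.comm_zero j v
  | succ n =>
    have hshift : mapDomain shiftIndex (gradient hV v) (n + 1, j) = D j n v :=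
      mapDomain_apply shiftIndex_injective (gradient hV v) (n, j)
    simpa [totalDeriv₁, gradient_apply, hshift] using hV.comm_succ j n v

/-- The gradient `v ↦ ∑ ∂v/∂u_j^{(n)} (λ + ∂)^n K_j(λ)` of which `δ_K` is the exterior
derivative. -/
noncomputable def operatorGradient {C : Type*} [CommRing C] [Algebra C F] (d : Derivation C F F)
    (N : ℕ) (K : Fin l → Fin l → ℕ → F) : V →ₗ[F] (ℕ × Fin l →₀ V) :=
  tensorId V (linearCombination F fun y => (prolong d)^[y.1] (operatorRow N K y.2)) ∘ₗ gradient hV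

theorem finsum_smul_partialDeriv (c : ℕ × Fin l → F) (v : V) :
    ∑ j, ∑ᶠ n, c (n, j) • D j n v = (gradient hV v).sum fun y w => c y • w := by
  have hfin : (Function.support fun y : Fin l × ℕ => c y.swap • D y.1 y.2 v).Finite :=
    (hV.d_fin v).subset fun y hy h => hy (by simp only [h, smul_zero])
  rw [← finsum_eq_sum_of_fintype]
  refine (finsum_curry _ hfin).symm.trans ?_
  rw [← finsum_comp_equiv (prodComm ℕ (Fin l))]
  refine finsum_eq_sum_of_support_subset _ fun y hy => ?_
  simp only [Finset.mem_coe, mem_support_iff, gradient_apply]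
  intro h
  exact hy (by simp [h])

include hV in
theorem coeff_finsum_coeffMap_mul_kFactor {C : Type*} [CommRing C] [Algebra C F]
    {d : Derivation C F F} (hd : ∀ f, algebraMap F V (d f) = pd (algebraMap F V f))
    (Q : MvPolynomial (Fin k) V) (N : ℕ) (K : Fin l → Fin l → ℕ → F) (j : Fin l)
    (x : Fin (k + 1) → ℕ × Fin l) (α : Fin (k + 1)) :
    (∑ᶠ n, coeffMap (D j n) (MvPolynomial.rename α.succAbove Q) *
        kFactor pd N (fun i j m => algebraMap F V (K i j m)) n j (x α).2 α).coeff (exponent x) =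
      ∑ᶠ n, (prolong d)^[n] (operatorRow N K j) (x α) •
        D j n (Q.coeff (exponent (α.removeNth x))) := by
  set Q' := MvPolynomial.rename α.succAbove Q
  have hfin : {n | coeffMap (D j n) Q' ≠ 0}.Finite := by
    refine (Q'.support.finite_toSet.biUnion fun m _ => (hV.d_fin (Q'.coeff m)).preimage
      (f := Prod.mk j) (Prod.mk_right_injective j).injOn).subset fun n hn => ?_
    contrapose! hn
    simp only [Set.mem_iUnion, not_exists] at hn
    exact fun h => h (Finset.sum_eq_zero fun m hm => by simpa using hn m hm)
  rw [← MvPolynomial.coeffAddMonoidHom_apply, AddMonoidHom.map_finsum _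
    (hfin.subset fun n hn h => hn (by simp only [h, zero_mul]))]
  exact finsum_congr fun n => coeff_coeffMap_mul_kFactor hd (map_zero _) Q N K n j x α

theorem coeffArray_deltaK {C : Type*} [CommRing C] [Algebra C F] [Algebra C V]
    {d : Derivation C F F} (hd : ∀ f, algebraMap F V (d f) = pd (algebraMap F V f))
    (N : ℕ) (K : Fin l → Fin l → ℕ → F) (P : (Fin k → Fin l) → MvPolynomial (Fin k) V) :
    coeffArray C (deltaK pd (fun j n => D j n) N (fun i j m => algebraMap F V (K i j m)) P) =
      extDiff (operatorGradient hV d N K) (coeffArray C P) := by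
  ext x
  simp only [extDiff_apply, operatorGradient, LinearMap.comp_apply, tensorId_apply,
    linearCombination_single, one_smul, coeffArray_apply, deltaK, MvPolynomial.coeff_sum,
    MvPolynomial.coeff_smul]
  refine Finset.sum_congr rfl fun α _ => congr_arg _ ?_
  simp only [coeff_finsum_coeffMap_mul_kFactor hV hd]
  exact finsum_smul_partialDeriv hV (fun y => (prolong d)^[y.1] (operatorRow N K y.2) (x α)) _

end Gradient

section Frame

/-- The maps `diff` and `total` of the frame are `δ_K` and `∂`, expressed on the coefficients of
arrays of polynomials. -/
structure AdaptedFrame.Represents {C F V E : Type*} [CommRing C] [Field F] [CommRing V]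
    [Algebra C F] [Module C V] [Algebra F V] {l : ℕ} (A : AdaptedFrame C F V (ℕ × Fin l) E)
    (pd : V → V) (D : Fin l → ℕ → V → V) (N : ℕ) (K : Fin l → Fin l → ℕ → V) : Prop where
  coeffArray_deltaK {k : ℕ} (P : (Fin k → Fin l) → MvPolynomial (Fin k) V) :
    coeffArray C (deltaK pd D N K P) = A.diff (coeffArray C P)
  coeffArray_bigD {k : ℕ} (P : (Fin k → Fin l) → MvPolynomial (Fin k) V) :
    coeffArray C (bigD pd P) = A.total (coeffArray C P)

theorem tensorId_adaptedGrad {F V E J X : Type*} [Field F] [AddCommGroup V] [Module F V]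
    (b : Module.Basis (ℕ ⊕ E) F (X →₀ F)) (e : J ≃ ℕ) {w : J → X →₀ F}
    (hw : ∀ y, b (.inl (e y)) = w y) (grad : V →ₗ[F] (J →₀ V)) :
    tensorId V b.repr.symm.toLinearMap ∘ₗ
        adaptedGrad E ((Finsupp.domLCongr e).toLinearMap ∘ₗ grad) =
      tensorId V (linearCombination F w) ∘ₗ grad := by
  have h : tensorId V b.repr.symm.toLinearMap ∘ₗ lmapDomain V F Sum.inl ∘ₗ
      (Finsupp.domLCongr e).toLinearMap = tensorId V (linearCombination F w) := by
    ext y v : 2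
    simp [tensorId_single, hw, mapDomain_single]
  rw [← h]
  rfl

theorem lt_divModEquiv_symm_iff {l : ℕ} [NeZero l] (t : ℕ) (y : ℕ × Fin l) :
    t < (Nat.divModEquiv l).symm y ↔ (Nat.divModEquiv l t).1 < y.1 ∨
      (Nat.divModEquiv l t).1 = y.1 ∧ (Nat.divModEquiv l t).2 < y.2 := by
  obtain ⟨s, rfl⟩ := (Nat.divModEquiv l).surjective y
  rw [Equiv.symm_apply_apply]
  simp only [Nat.divModEquiv_apply, Fin.lt_def, Fin.val_ofNat]
  have ht := Nat.div_add_mod t l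
  have hs := Nat.div_add_mod s l
  constructor
  · intro h
    refine (Nat.div_le_div_right (c := l) h.le).lt_or_eq.imp_right fun heq => ⟨heq, ?_⟩
    rw [heq] at ht
    lia
  · rintro (h | ⟨heq, h⟩)
    · exact Nat.lt_of_div_lt_div h
    · rw [heq] at ht
      lia

variable {F V : Type*} [Field F] [CommRing V] [Algebra F V] {l : ℕ} {pd : V → V}
  {D : Fin l → ℕ → Derivation F V V} (hV : IsAlgDiffFun pd fun j n => D j n)

/-- The gradient with the variables `u_i^{(n)}` enumerated in lexicographic order. -/
noncomputable def lexGradient [NeZero l] : V →ₗ[F] (ℕ →₀ V) :=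
  (Finsupp.domLCongr (Nat.divModEquiv l).symm).toLinearMap ∘ₗ gradient hV

theorem lexGradient_apply [NeZero l] (v : V) (t : ℕ) :
    lexGradient hV v t = D (Nat.divModEquiv l t).2 (Nat.divModEquiv l t).1 v :=
  rfl

theorem lexGradient_eq_zero_iff [NeZero l] {v : V} :
    lexGradient hV v = 0 ↔ ∀ j n, D j n v = 0 := by
  simp only [lexGradient, LinearMap.comp_apply, LinearEquiv.coe_coe, LinearEquiv.map_eq_zero_iff,
    Finsupp.ext_iff, Prod.forall]
  exact forall_comm

theorem lexGradient_mem_supported_Iic_iff [NeZero l] {t : ℕ} {v : V} :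
    lexGradient hV v ∈ supported V F (Set.Iic t) ↔
      memVmi (fun j n => D j n) (Nat.divModEquiv l t).1 (Nat.divModEquiv l t).2 v := by
  rw [mem_supported', (Nat.divModEquiv l).forall_congr_left]
  simp only [Prod.forall, Set.mem_Iic, not_le, lt_divModEquiv_symm_iff, lexGradient_apply,
    Equiv.apply_symm_apply, memVmi]

theorem isNormalGrad_lexGradient [NeZero l] (hnorm : IsNormalADF fun j n => D j n) :
    IsNormalGrad (lexGradient hV) := by
  refine ⟨fun v s t => hV.d_comm _ _ _ _ v, fun t v hv => ?_⟩
  obtain ⟨w, hw, hwv⟩ := hnorm _ _ v ((lexGradient_mem_supported_Iic_iff hV).1 hv)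
  exact ⟨w, (lexGradient_mem_supported_Iic_iff hV).2 hw, hwv⟩

theorem derivation_smul {C : Type*} [CommRing C] [Algebra C F] [Algebra C V]
    {d : Derivation C F F} {pd : Derivation C V V}
    (hd : ∀ f, algebraMap F V (d f) = pd (algebraMap F V f)) (f : F) (v : V) :
    pd (f • v) = d f • v + f • pd v := by
  rw [Algebra.smul_def, pd.leibniz, ← hd, smul_eq_mul, smul_eq_mul, Algebra.smul_def,
    Algebra.smul_def, mul_comm v, add_comm]

theorem exists_adaptedFrame {C : Type*} [CommRing C] [Algebra C F] [Algebra C V]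
    [IsScalarTower C F V] [NeZero l]
    {d : Derivation C F F} {pd : Derivation C V V} (hV : IsAlgDiffFun pd fun j n => D j n)
    (hnorm : IsNormalADF fun j n => D j n)
    (hF : ∀ v, (∀ j n, D j n v = 0) → v ∈ (algebraMap F V).range)
    (hd : ∀ f, algebraMap F V (d f) = pd (algebraMap F V f)) (hlc : IsLinearlyClosed d)
    (N : ℕ) (K : Fin l → Fin l → ℕ → F) (hK : IsUnit (Matrix.of fun i j => K i j N)) :
    ∃ A : AdaptedFrame C F V (ℕ × Fin l) (Fin (N * l)),
      A.Represents pd (fun j n => D j n) N (fun i j m => algebraMap F V (K i j m)) ∧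
        ∀ v, v ∈ A.constants ↔ (∀ j n, D j n v = 0) ∧ pd v = 0 := by
  obtain ⟨b, hb, hrepr⟩ := exists_basis_prolong_isHorizontal d hlc N K hK
  have hgrad := tensorId_adaptedGrad (V := V) b (Nat.divModEquiv l).symm
    (fun y => hb y.1 y.2) (gradient hV)
  let A : AdaptedFrame C F V (ℕ × Fin l) (Fin (N * l)) :=
    { d, pd := pd.toLinearMap, pd_smul := derivation_smul hd, grad := lexGradient hV
      isNormalGrad := isNormalGrad_lexGradient hV hnorm
      exists_primitive := fun v hv => by
        obtain ⟨f, rfl⟩ := hF v ((lexGradient_eq_zero_iff hV).1 hv)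
        obtain ⟨g, rfl⟩ := hlc.surjective f
        exact ⟨algebraMap F V g, (lexGradient_eq_zero_iff hV).2 fun j n =>
          (D j n).map_algebraMap g, (hd g).symm⟩
      shift := shiftIndex, shift_injective := shiftIndex_injective
      degree := Prod.fst, degree_lt := fun x => x.1.lt_succ_self
      basis := b, repr_shift := hrepr
      grad_pd := fun v => by
        rw [lexGradient, hgrad, LinearMap.comp_apply, Derivation.coeFn_coe, gradient_total]
        refine tensorId_totalDeriv₁ (derivation_smul hd) (fun y => ?_) _
        simp only [linearCombination_single, one_smul, shiftIndex, Function.iterate_succ_apply']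
        rfl }
  refine ⟨A, ⟨fun P => ?_, coeffArray_bigD pd.toLinearMap⟩, fun v => ?_⟩
  · rw [coeffArray_deltaK hV hd]
    exact congr_arg (fun g => extDiff g (coeffArray C P)) hgrad.symm
  · exact and_congr_left' (lexGradient_eq_zero_iff hV)

end Frame

section Omega

theorem rank_quotient_comap_equiv.{u} {R : Type*} {M M' : Type u} [Ring R]
    [AddCommGroup M] [Module R M] [AddCommGroup M'] [Module R M'] (e : M ≃ₗ[R] M')
    (Z B : Submodule R M') :
    Module.rank R (Z.comap e.toLinearMap ⧸
        (B.comap e.toLinearMap).comap (Z.comap e.toLinearMap).subtype) =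
      Module.rank R (Z ⧸ B.comap Z.subtype) := by
  refine (Submodule.Quotient.equiv _ _ (e.ofSubmodule' Z) ?_).rank_eq
  rw [Submodule.map_equiv_eq_comap_symm]
  ext z
  simp

variable {C F V E : Type*} [CommRing C] [Field F] [CommRing V] [Algebra C F] [Module C V]
  [Algebra F V] [IsScalarTower C F V] {k l N : ℕ} {pd : V → V} {D : Fin l → ℕ → V → V}
  {K : Fin l → Fin l → ℕ → V} {A : AdaptedFrame C F V (ℕ × Fin l) E}

theorem mem_skewCochains_coeffArray {P : (Fin k → Fin l) → MvPolynomial (Fin k) V} :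
    coeffArray C P ∈ skewCochains C (ℕ × Fin l) V k ↔ OmegaSkew P := by
  rw [mem_skewCochains, isSkew_coeffArray]

theorem AdaptedFrame.Represents.mem_cocycles (h : A.Represents pd D N K)
    {P : (Fin k → Fin l) → MvPolynomial (Fin k) V} : coeffArray C P ∈ A.cocycles k ↔
      OmegaSkew P ∧ ∃ Q, OmegaSkew Q ∧ deltaK pd D N K P = bigD pd Q := by
  simp only [cocycles, Submodule.mem_inf, Submodule.mem_comap, Submodule.mem_map,
    mem_skewCochains_coeffArray, (coeffArray C).surjective.exists, LinearMap.restrictScalars_apply,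
    ← h.coeffArray_deltaK, ← h.coeffArray_bigD, (coeffArray C).injective.eq_iff, eq_comm]

theorem AdaptedFrame.Represents.mem_coboundaries_zero (h : A.Represents pd D N K)
    {P : (Fin 0 → Fin l) → MvPolynomial (Fin 0) V} :
    coeffArray C P ∈ A.coboundaries 0 ↔ ∃ R, OmegaSkew R ∧ P = bigD pd R := by
  simp only [coboundaries, exactCochains, bot_sup_eq, Submodule.mem_map,
    (coeffArray C).surjective.exists, mem_skewCochains_coeffArray, ← h.coeffArray_bigD,
    (coeffArray C).injective.eq_iff, eq_comm]

theorem AdaptedFrame.Represents.mem_coboundaries_succ (h : A.Represents pd D N K)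
    {P : (Fin (k + 1) → Fin l) → MvPolynomial (Fin (k + 1)) V} :
    coeffArray C P ∈ A.coboundaries (k + 1) ↔
      ∃ Q R, OmegaSkew Q ∧ OmegaSkew R ∧ P = deltaK pd D N K Q + bigD pd R := by
  simp only [coboundaries, exactCochains, Submodule.mem_sup, Submodule.mem_map,
    (coeffArray C).surjective.exists, mem_skewCochains_coeffArray, LinearMap.restrictScalars_apply,
    ← h.coeffArray_deltaK, ← h.coeffArray_bigD, exists_exists_and_eq_and, ← map_add,
    (coeffArray C).injective.eq_iff, @eq_comm _ P, exists_and_left]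

theorem AdaptedFrame.rank_comap_coeffArray [Module ℚ V] [LinearOrder E] [Finite E] [Nontrivial C]
    (e : A.constants ≃ₗ[C] C) {Z B : Submodule C ((Fin k → Fin l) → MvPolynomial (Fin k) V)}
    (hZ : ∀ P, P ∈ Z ↔ coeffArray C P ∈ A.cocycles k)
    (hB : ∀ P, P ∈ B ↔ coeffArray C P ∈ A.coboundaries k) :
    Module.rank C (Z ⧸ B.comap Z.subtype) = ((Nat.card E).choose (k + 1) : Cardinal) := by
  obtain rfl : Z = (A.cocycles k).comap (coeffArray C).toLinearMap := Submodule.ext hZ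
  obtain rfl : B = (A.coboundaries k).comap (coeffArray C).toLinearMap := Submodule.ext hB
  rw [rank_quotient_comap_equiv, A.rank_cohomology e]

end Omega

section Quasiconstants

variable {V : Type*} [CommRing V] {l : ℕ} {pd : V → V} {D : Fin l → ℕ → V → V}
  (hV : IsAlgDiffFun pd D)

theorem map_one_eq_zero_of_leibniz {f : V → V} (hf : ∀ a b, f (a * b) = f a * b + a * f b) :
    f 1 = 0 := by
  simpa using hf 1 1

/-- The algebra `F` of quasiconstants. -/
def quasiconstants : Subring V where
  carrier := {v | ∀ j n, D j n v = 0}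
  one_mem' j n := map_one_eq_zero_of_leibniz (hV.d_leibniz j n)
  mul_mem' ha hb j n := by rw [hV.d_leibniz, ha j n, hb j n, zero_mul, mul_zero, add_zero]
  zero_mem' j n := (AddMonoidHom.mk' (D j n) (hV.d_add j n)).map_zero
  add_mem' ha hb j n := by rw [hV.d_add, ha j n, hb j n, add_zero]
  neg_mem' {a} ha j n := by
    rw [← neg_eq_zero, ← ha j n]
    exact congr(-$((AddMonoidHom.mk' (D j n) (hV.d_add j n)).map_neg a)).trans (neg_neg _)

/-- The partial derivative `∂/∂u_j^{(n)}`. -/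
def partialDerivation (j : Fin l) (n : ℕ) : Derivation (quasiconstants hV) V V :=
  .mk' { toFun := D j n
         map_add' := hV.d_add j n
         map_smul' := fun f v => by
          simpa [Subring.smul_def, f.2 j n] using hV.d_leibniz j n f v }
    fun a b => (hV.d_leibniz j n a b).trans (by simp [mul_comm, add_comm])

variable {C : Subring V} (hC : ∀ c ∈ C, pd c = 0)

/-- The derivation `∂`, linear over a ring of constants. -/
def totalDerivation : Derivation C V V :=
  .mk' { toFun := pd
         map_add' := hV.pd_add
         map_smul' := fun c v => by simpa [Subring.smul_def, hC c c.2] using hV.pd_leibniz c v }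
    fun a b => (hV.pd_leibniz a b).trans (by simp [mul_comm, add_comm])

theorem total_mem_quasiconstants {v : V} (hv : v ∈ quasiconstants hV) :
    pd v ∈ quasiconstants hV := by
  have h0 : pd 0 = 0 := (AddMonoidHom.mk' pd hV.pd_add).map_zero
  rintro j (_ | n)
  · rw [hV.comm_zero, hv j 0, h0]
  · rw [hV.comm_succ, hv j (n + 1), hv j n, h0, add_zero]

theorem isLinearlyClosed_quasiconstants {d : quasiconstants hV → quasiconstants hV}
    (hd : ∀ f, (d f : V) = pd f)
    (hlc : ∀ (M : ℕ) (a : ℕ → V),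
      (∀ (n : ℕ) (j : Fin l) (n' : ℕ), D j n' (a n) = 0) → a M ≠ 0 →
      (∀ b : V, (∀ (j : Fin l) (n' : ℕ), D j n' b = 0) →
        ∃ u : V, (∀ (j : Fin l) (n' : ℕ), D j n' u = 0) ∧
          ∑ n ∈ Finset.range (M + 1), a n * pd^[n] u = b) ∧
      (1 ≤ M → ∃ u : V, u ≠ 0 ∧ (∀ (j : Fin l) (n' : ℕ), D j n' u = 0) ∧
          ∑ n ∈ Finset.range (M + 1), a n * pd^[n] u = 0)) :
    IsLinearlyClosed d := by
  intro M a ha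
  have hsum (u : quasiconstants hV) : (∑ n ∈ Finset.range (M + 1), a n * d^[n] u : V) =
      ∑ n ∈ Finset.range (M + 1), (a n : V) * pd^[n] u :=
    Finset.sum_congr rfl fun n _ => congr((a n : V) * $(
      (Function.Semiconj.iterate_right (f := Subtype.val) hd n) u))
  obtain ⟨hsurj, hker⟩ := hlc M (fun n => a n) (fun n => (a n).2) (by simpa using ha)
  refine ⟨fun b => ?_, fun hM => ?_⟩
  · obtain ⟨u, hu, h⟩ := hsurj b b.2
    exact ⟨⟨u, hu⟩, Subtype.ext (by push_cast; exact (hsum ⟨u, hu⟩).trans h)⟩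
  · obtain ⟨u, hu0, hu, h⟩ := hker hM
    exact ⟨⟨u, hu⟩, fun h0 => hu0 congr(Subtype.val $h0),
      Subtype.ext (by push_cast; exact (hsum ⟨u, hu⟩).trans h)⟩

end Quasiconstants

theorem exists_derivation_algebraMap {C F V : Type*} [CommRing C] [CommRing F] [CommRing V]
    [Algebra C F] [Algebra C V] [Algebra F V] [IsScalarTower C F V]
    (hinj : Function.Injective (algebraMap F V)) (pd : Derivation C V V)
    (hpd : ∀ f, ∃ g, algebraMap F V g = pd (algebraMap F V f)) :
    ∃ d : Derivation C F F, ∀ f, algebraMap F V (d f) = pd (algebraMap F V f) := by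
  choose d hd using hpd
  refine ⟨.mk' { toFun := d, map_add' := fun f g => hinj ?_, map_smul' := fun c f => hinj ?_ }
    fun f g => hinj ?_, hd⟩
  · simp [hd]
  · simp [hd, Algebra.smul_def, ← IsScalarTower.algebraMap_apply]
  · simp [hd]

theorem isUnit_of_isUnit_map_matrix {F V n : Type*} [Field F] [CommRing V] [Nontrivial V]
    [Algebra F V] [Fintype n] [DecidableEq n] {M : Matrix n n F}
    (hM : IsUnit (M.map (algebraMap F V))) : IsUnit M := by
  rw [Matrix.isUnit_iff_isUnit_det] at hM ⊢
  rwa [← RingHom.mapMatrix_apply, ← RingHom.map_det, isUnit_map_iff] at hM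

end VariationalComplex

open VariationalComplex

/-- Let `V` be a normal algebra of differential functions in `ℓ < ∞` differential
variables over a field of characteristic zero, whose algebra of quasiconstants `F` is a
linearly closed differential field with respect to the restriction of `∂`, with subfield
of constants `C = {c ∈ F : ∂c = 0}`, and let `K(∂)` be an `ℓ×ℓ` matrix differential
operator of order `N` with quasiconstant coefficients and invertible leading coefficient.
Then for every `k ≥ 0` the cohomology of the generalized variational complex
`(Ω^•(V), δ_K)`, where `Ω^k(V) = Ω̃^k(V)/∂Ω̃^k(V)`, satisfies
`dim_C H^k(Ω^•(V), δ_K) = binom(Nℓ, k+1)`.  Here `H^k(Ω^•(V), δ_K)` is realized as the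
subquotient `Z'_k / B'_k` of `Ω̃^k(V)`, where
`Z'_k = {P ∈ Ω̃^k : δ_K P ∈ ∂ Ω̃^{k+1}}` and `B'_k = δ_K(Ω̃^{k−1}) + ∂ Ω̃^k`. -/
theorem stmt_19 (V : Type*) [CommRing V] [Algebra ℚ V] [Nontrivial V]
    (l : ℕ) (hl : 0 < l) (pd : V → V) (D : Fin l → ℕ → V → V)
    (hV : IsAlgDiffFun pd D) (hnorm : IsNormalADF D)
    (hlc : ∀ (M : ℕ) (a : ℕ → V),
      (∀ (n : ℕ) (j : Fin l) (n' : ℕ), D j n' (a n) = 0) → a M ≠ 0 →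
      (∀ b : V, (∀ (j : Fin l) (n' : ℕ), D j n' b = 0) →
        ∃ u : V, (∀ (j : Fin l) (n' : ℕ), D j n' u = 0) ∧
          ∑ n ∈ Finset.range (M + 1), a n * pd^[n] u = b) ∧
      (1 ≤ M → ∃ u : V, u ≠ 0 ∧ (∀ (j : Fin l) (n' : ℕ), D j n' u = 0) ∧
          ∑ n ∈ Finset.range (M + 1), a n * pd^[n] u = 0))
    (Cs : Subring V)
    (hCs : ∀ x : V, x ∈ Cs ↔ (∀ (j : Fin l) (n : ℕ), D j n x = 0) ∧ pd x = 0)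
    (N : ℕ) (Kc : Fin l → Fin l → ℕ → V)
    (hKquasi : ∀ (i j : Fin l) (m : ℕ) (j' : Fin l) (n : ℕ), D j' n (Kc i j m) = 0)
    (hKinv : IsUnit (Matrix.of fun i j : Fin l => Kc i j N)) :
    (∀ (Z0 B0 : Submodule Cs ((Fin 0 → Fin l) → MvPolynomial (Fin 0) V)),
      (∀ P, P ∈ Z0 ↔ OmegaSkew P ∧
        ∃ Q : (Fin 1 → Fin l) → MvPolynomial (Fin 1) V,
          OmegaSkew Q ∧ deltaK pd D N Kc P = bigD pd Q) →
      (∀ P, P ∈ B0 ↔ ∃ R : (Fin 0 → Fin l) → MvPolynomial (Fin 0) V,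
          OmegaSkew R ∧ P = bigD pd R) →
      Module.rank Cs (↥Z0 ⧸ Submodule.comap Z0.subtype B0)
        = ((N * l).choose 1 : Cardinal)) ∧
    (∀ (k : ℕ)
        (Z B : Submodule Cs ((Fin (k + 1) → Fin l) → MvPolynomial (Fin (k + 1)) V)),
      (∀ P, P ∈ Z ↔ OmegaSkew P ∧
        ∃ Q : (Fin (k + 2) → Fin l) → MvPolynomial (Fin (k + 2)) V,
          OmegaSkew Q ∧ deltaK pd D N Kc P = bigD pd Q) →
      (∀ P, P ∈ B ↔ ∃ (Q' : (Fin k → Fin l) → MvPolynomial (Fin k) V)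
          (R : (Fin (k + 1) → Fin l) → MvPolynomial (Fin (k + 1)) V),
          OmegaSkew Q' ∧ OmegaSkew R ∧ P = deltaK pd D N Kc Q' + bigD pd R) →
      Module.rank Cs (↥Z ⧸ Submodule.comap Z.subtype B)
        = ((N * l).choose (k + 2) : Cardinal)) := by
  have : NeZero l := ⟨hl.ne'⟩
  have hCF : Cs ≤ quasiconstants hV := fun c hc => ((hCs c).1 hc).1
  let : Algebra Cs (quasiconstants hV) := (Subring.inclusion hCF).toAlgebra
  have : IsScalarTower Cs (quasiconstants hV) V := .of_algebraMap_eq' rfl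
  obtain ⟨d, hd⟩ := exists_derivation_algebraMap (F := quasiconstants hV) Subtype.val_injective
    (totalDerivation hV fun c hc => ((hCs c).1 hc).2)
    fun f => ⟨⟨pd f, total_mem_quasiconstants hV f.2⟩, rfl⟩
  have hlcF : IsLinearlyClosed d := isLinearlyClosed_quasiconstants hV hd hlc
  let := hlcF.isField.toField
  obtain ⟨A, hA, hconst⟩ := exists_adaptedFrame (D := partialDerivation hV) hV hnorm
    (fun v hv => ⟨⟨v, hv⟩, rfl⟩) hd hlcF N (fun i j m => ⟨Kc i j m, hKquasi i j m⟩)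
    (isUnit_of_isUnit_map_matrix hKinv)
  let e : A.constants ≃ₗ[Cs] Cs :=
    { toFun := fun v => ⟨v, (hCs v).2 ((hconst v).1 v.2)⟩
      map_add' := fun _ _ => rfl
      map_smul' := fun _ _ => rfl
      invFun := fun c => ⟨c, (hconst c).2 ((hCs c).1 c.2)⟩ }
  constructor
  · intro Z B hZ hB
    simpa using A.rank_comap_coeffArray e (fun P => (hZ P).trans hA.mem_cocycles.symm)
      fun P => (hB P).trans hA.mem_coboundaries_zero.symm
  · intro k Z B hZ hB
    simpa using A.rank_comap_coeffArray e (fun P => (hZ P).trans hA.mem_cocycles.symm)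
      fun P => (hB P).trans hA.mem_coboundaries_succ.symm
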